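/- arXiv:2603.21453 — 3 statements merged into one kernel-verified Lean document; each statement's English description precedes it below -/
import Mathlib

section
/- Let I ⊂ [−1, 1] be a closed interval of positive length. There exist constants C = C(I) > 0 and N = N(I) such that for every integer n ≥ N and every choice of distinct nodes x_1 < … < x_n in [−1, 1], one has sup_{x ∈ I} λ(x) ≥ (2/π)·log n − C, where λ is the Lebesgue function associated to these nodes. -/
/-!
Suppose `λ ≤ Λ` on `[a, b]`. Let `d_j` be the gaps between consecutive nodes inside `[a, b]`, `c_j`
their midpoints, `L` their total length, and average `λ(c_j)` with the weights `d_j`. Each basis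
function is `|ℓ_k(c)| = W(c) m_k / |c - y_k|`, where `W` is the modulus of the node polynomial and
`m_k` the modulus of the barycentric weight. Two consecutive nodes are paired by
`(m_k + m_{k+1}) / 2 ≥ √(m_k m_{k+1})` and `|c_j - y_k|` is bounded by the length of the span of the
gaps `j` and `k`, regularized by `1 / n`; the resulting kernel `kap` is symmetric. Applying
`exp t ≥ 1 + t` to the normalized product of `W(c_j)` with `√(m_k m_{k+1})` and exchanging `j` and
`k` (`symm_sum`) turns all logarithms into a purely local quantity of the single gap `j`,
`log (π W(c_j) √(m_j m_{j+1}) / d_j)`, whose factors at nodes outside the gap are at least `1` by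
concavity of `log`.

* That local quantity is at least `beta` (`beta_le_log`), a truncation to the `M` nearest nodes on
  either side in which the convex function `phi` is replaced by its tangents at the integers. Its
  weighted average is nonnegative up to small errors (`sum_beta_ge`): the average only sees the
  values `phi m`, and the Wallis product says that `2 ∑ phi m = log (4 / π)`.
* The kernel has row sums at most `2 log n + 4` (`row_le`), and its double sum is at least
  `2 L log n` up to a bounded error and an error `5 n ∑ d_j ^ 2` (`double_sum_ge`). Together these
  produce the main term `2 L log n` in `averaged_lower_bound`.
* The error `n ∑ d_j ^ 2` is absorbed by what the regularization of `|c_j - y_k|` discards: testing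
  the interpolation formula on a power of a Chebyshev polynomial peaking at `c_j` (`exists_peak`)
  shows that this part of `λ(c_j)` is at least `5 n d_j` minus a constant (`near_sum_ge`). The same
  polynomial shows that `λ` is at least of order `(n ρ) ^ 3` at a point with no node within distance
  `ρ` (`lam_ge_of_far`); hence, when `Λ < log n`, all gaps are `O(log n / n)` and nodes come close to
  both ends of `[a, b]`, so that `L ≥ (b - a) / 2`.
-/

open Real

noncomputable section

/-! ### The concavity defect of the logarithm and the Wallis product -/

/-- Concavity defect of `log` at the midpoint of a gap of length `1`, seen from a node at distance
`s` beyond the gap. -/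
def phi (s : ℝ) : ℝ := log (s + 1 / 2) - log s / 2 - log (s + 1) / 2

/-- Minus the derivative of `phi`. -/
def psi (s : ℝ) : ℝ := 1 / (2 * s * (s + 1) * (2 * s + 1))

/-- Value at `0` of the tangent line to `phi` at `s`. -/
def tau (s : ℝ) : ℝ := phi s + s * psi s

lemma phi_nonneg {s : ℝ} (hs : 0 < s) : 0 ≤ phi s := by
  have h : log (s * (s + 1)) ≤ log ((s + 1 / 2) ^ 2) :=
    log_le_log (by positivity) (by nlinarith)
  rw [log_mul hs.ne' (by positivity), log_pow] at h
  push_cast at h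
  unfold phi
  linarith

lemma psi_nonneg {s : ℝ} (hs : 0 < s) : 0 ≤ psi s := by
  unfold psi; positivity

lemma tau_nonneg {s : ℝ} (hs : 0 < s) : 0 ≤ tau s := by
  have h1 := phi_nonneg hs
  have h2 := mul_nonneg hs.le (psi_nonneg hs)
  unfold tau; linarith

lemma psi_anti {s t : ℝ} (hs : 0 < s) (hst : s ≤ t) : psi t ≤ psi s := by
  have ht : 0 < t := hs.trans_le hst
  unfold psi
  gcongr

lemma hasDerivAt_phi {s : ℝ} (hs : 0 < s) : HasDerivAt phi (-psi s) s := by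
  have h1 : HasDerivAt (fun s : ℝ => log (s + 1 / 2)) (1 / (s + 1 / 2)) s :=
    ((hasDerivAt_id s).add_const (1 / 2 : ℝ)).log (by simp only [id]; positivity)
  have h2 : HasDerivAt (fun s : ℝ => log s / 2) (1 / s / 2) s :=
    ((hasDerivAt_id s).log hs.ne').div_const 2
  have h3 : HasDerivAt (fun s : ℝ => log (s + 1) / 2) (1 / (s + 1) / 2) s :=
    (((hasDerivAt_id s).add_const (1 : ℝ)).log (by simp only [id]; positivity)).div_const 2
  refine ((h1.sub h2).sub h3).congr_deriv ?_
  unfold psi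
  field_simp
  ring

/-- `phi` is convex, so it lies above its tangent line at `m`, whose slope is `-psi m`. -/
lemma phi_tangent {m s : ℝ} (hm : 0 < m) (hs : 0 < s) : tau m - psi m * s ≤ phi s := by
  have hd : ∀ t : ℝ, 0 < t → HasDerivAt (fun t => phi t + psi m * t) (-psi t + psi m) t := by
    intro t ht
    have := (hasDerivAt_phi ht).add ((hasDerivAt_id t).const_mul (psi m))
    rw [mul_one] at this
    exact this
  have key : phi m + psi m * m ≤ phi s + psi m * s := by
    rcases le_total m s with h | h
    · have hmono : MonotoneOn (fun t => phi t + psi m * t) (Set.Ici m) := by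
        apply monotoneOn_of_deriv_nonneg (convex_Ici m)
        · exact fun t ht => (hd t (hm.trans_le ht)).continuousAt.continuousWithinAt
        · intro t ht
          rw [interior_Ici] at ht
          exact (hd t (hm.trans ht)).differentiableAt.differentiableWithinAt
        · intro t ht
          rw [interior_Ici] at ht
          rw [(hd t (hm.trans ht)).deriv]
          have := psi_anti hm (le_of_lt ht)
          linarith
      exact hmono Set.self_mem_Ici h h
    · have hanti : AntitoneOn (fun t => phi t + psi m * t) (Set.Ioc 0 m) := by
        apply antitoneOn_of_deriv_nonpos (convex_Ioc 0 m)
        · exact fun t ht => (hd t ht.1).continuousAt.continuousWithinAt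
        · intro t ht
          rw [interior_Ioc] at ht
          exact (hd t ht.1).differentiableAt.differentiableWithinAt
        · intro t ht
          rw [interior_Ioc] at ht
          rw [(hd t ht.1).deriv]
          have := psi_anti ht.1 ht.2.le
          linarith
      exact hanti ⟨hs, h⟩ ⟨hm, le_rfl⟩ h
  unfold tau
  linarith

lemma phi_le {s : ℝ} (hs : 0 < s) : phi s ≤ 1 / (8 * s * (s + 1)) := by
  have h := log_le_sub_one_of_pos (x := (s + 1 / 2) ^ 2 / (s * (s + 1))) (by positivity)
  rw [log_div (by positivity) (by positivity), log_mul hs.ne' (by positivity), log_pow] at h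
  have e : (s + 1 / 2) ^ 2 / (s * (s + 1)) - 1 = 2 * (1 / (8 * s * (s + 1))) := by
    field_simp
    ring
  rw [e] at h
  push_cast at h
  unfold phi
  linarith

lemma tau_le {s : ℝ} (hs : 1 ≤ s) : tau s ≤ 1 / (s * (s + 1)) := by
  have h0 : 0 < s := by linarith
  have h1 := phi_le h0
  have h2 : s * psi s ≤ 1 / (2 * (s * (s + 1))) := by
    unfold psi
    rw [mul_one_div, div_le_div_iff₀ (by positivity) (by positivity)]
    nlinarith [mul_pos h0 h0, mul_pos (mul_pos h0 h0) h0]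
  have h3 : 1 / (8 * s * (s + 1)) ≤ 1 / (2 * (s * (s + 1))) := by
    apply one_div_le_one_div_of_le (by positivity)
    nlinarith
  have h4 : 1 / (s * (s + 1)) = 1 / (2 * (s * (s + 1))) + 1 / (2 * (s * (s + 1))) := by
    field_simp
    norm_num
  unfold tau
  linarith

lemma mul_tau_le_one {s : ℝ} (hs : 1 ≤ s) : s * tau s ≤ 1 := by
  have h := mul_le_mul_of_nonneg_left (tau_le hs) (by linarith : 0 ≤ s)
  refine h.trans ?_
  rw [mul_one_div, div_le_one (by nlinarith)]
  nlinarith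

lemma sum_tau_le (M : ℕ) : ∑ m ∈ Finset.range M, tau (m + 1) ≤ 1 := by
  have : ∑ m ∈ Finset.range M, tau (m + 1) ≤ 1 - 1 / ((M : ℝ) + 1) := by
    induction M with
    | zero => simp
    | succ M ih =>
      rw [Finset.sum_range_succ]
      have h := tau_le (s := (M : ℝ) + 1) (by linarith [(Nat.cast_nonneg M : (0 : ℝ) ≤ M)])
      have e : 1 / (((M : ℝ) + 1) * (M + 1 + 1)) = 1 / ((M : ℝ) + 1) - 1 / ((M : ℝ) + 1 + 1) := by
        field_simp
        ring
      push_cast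
      linarith
  have h2 : 0 ≤ 1 / ((M : ℝ) + 1) := by positivity
  linarith

/-- The Wallis product: `2 ∑_{m ≥ 1} phi m = log (4 / π)`, with an explicit tail bound. -/
lemma wallis_phi (M : ℕ) :
    log (4 / π) - 1 / ((M : ℝ) + 1) ≤ 2 * ∑ m ∈ Finset.range M, phi (m + 1) := by
  have e : 2 * ∑ m ∈ Finset.range M, phi (m + 1)
      = log (2 * (2 * M + 1) / (2 * M + 2)) - log (Real.Wallis.W M) := by
    induction M with
    | zero => simp [Real.Wallis.W]
    | succ M ih =>
      have hW := Real.Wallis.W_pos M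
      rw [Finset.sum_range_succ, mul_add, ih, Real.Wallis.W_succ, phi]
      have e3 : (M : ℝ) + 1 + 1 / 2 = (2 * M + 3) / 2 := by ring
      have e4 : (2 * ((M + 1 : ℕ) : ℝ) + 1) = 2 * M + 3 := by push_cast; ring
      have e5 : (2 * ((M + 1 : ℕ) : ℝ) + 2) = 2 * (M + 1 + 1) := by push_cast; ring
      have e6 : (2 * (M : ℝ) + 2) = 2 * (M + 1) := by ring
      rw [e3, e4, e5, e6]
      rw [log_mul hW.ne' (by positivity), log_mul (x := _ / _) (by positivity) (by positivity),
        log_div (x := 2 * (M + 1)) (by positivity) (by positivity),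
        log_div (x := 2 * (M + 1)) (by positivity) (by positivity),
        log_div (x := 2 * (2 * M + 1)) (by positivity) (by positivity),
        log_div (x := 2 * (2 * M + 3)) (by positivity) (by positivity),
        log_div (x := 2 * M + 3) (by positivity) (by positivity),
        log_mul (x := 2) (by positivity) (by positivity),
        log_mul (x := 2) (by positivity) (by positivity),
        log_mul (x := 2) (by positivity) (by positivity),
        log_mul (x := 2) (by positivity) (by positivity)]
      ring
  rw [e]
  have h1 : log (Real.Wallis.W M) ≤ log (π / 2) :=
    log_le_log (Real.Wallis.W_pos M) (Real.Wallis.W_le M)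
  have h2 := one_sub_inv_le_log_of_pos (x := (2 * (M : ℝ) + 1) / (2 * M + 2)) (by positivity)
  have h3 : 1 - ((2 * (M : ℝ) + 1) / (2 * M + 2))⁻¹ = - (1 / (2 * M + 1)) := by
    field_simp
    ring
  have h4 : 1 / (2 * (M : ℝ) + 1) ≤ 1 / ((M : ℝ) + 1) := by
    apply one_div_le_one_div_of_le (by positivity)
    linarith [(Nat.cast_nonneg M : (0 : ℝ) ≤ M)]
  rw [mul_div_assoc, log_mul two_ne_zero (by positivity)]
  have h5 : log (4 / π) = log 2 - log (π / 2) := by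
    rw [← log_div two_ne_zero (by positivity)]
    congr 1
    field_simp
    norm_num
  linarith

/-! ### A peaking polynomial -/

open Polynomial in
/-- A polynomial of degree less than `n` with value `1` at `c` which decays like `(n |x - c|) ^ (-3)`
on `[-1, 1]`. It is the cube of `U_m (1 - (x - c) ^ 2 / 8) / (m + 1)` with `U_m` the Chebyshev
polynomial of the second kind and `m = ⌊(n - 1) / 6⌋`. -/
lemma exists_peak (n : ℕ) (hn : 1 ≤ n) (c : ℝ) (hc : c ∈ Set.Icc (-1 : ℝ) 1) :
    ∃ P : ℝ[X], P.degree < n ∧ P.eval c = 1 ∧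
      ∀ x ∈ Set.Icc (-1 : ℝ) 1, (n * |x - c|) ^ 3 * |P.eval x| ≤ 5832 := by
  obtain ⟨m, hm1, hm2⟩ : ∃ m : ℕ, 6 * m + 1 ≤ n ∧ n ≤ 6 * (m + 1) := ⟨(n - 1) / 6, by omega, by omega⟩
  set y : ℝ[X] := 1 - C (1 / 8) * (X - C c) ^ 2 with hy
  set Q : ℝ[X] := (Polynomial.Chebyshev.U ℝ m).comp y with hQ
  have hyev : ∀ x, y.eval x = 1 - (x - c) ^ 2 / 8 := by
    intro x; simp [hy]; ring
  have hm0 : (0 : ℝ) < m + 1 := by positivity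
  refine ⟨(C (1 / ((m : ℝ) + 1)) * Q) ^ 3, ?_, ?_, ?_⟩
  · have hyd : y.natDegree ≤ 2 := by
      rw [hy]; compute_degree
    have hQd : Q.natDegree ≤ m * 2 := by
      rw [hQ]
      refine natDegree_comp_le.trans ?_
      rw [Polynomial.Chebyshev.natDegree_U_natCast]
      exact Nat.mul_le_mul_left _ hyd
    have h3 : ((C (1 / ((m : ℝ) + 1)) * Q) ^ 3).natDegree ≤ 3 * (m * 2) := by
      refine natDegree_pow_le.trans (Nat.mul_le_mul_left _ ?_)
      exact (natDegree_C_mul_le _ _).trans hQd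
    refine degree_le_natDegree.trans_lt ?_
    exact Nat.cast_lt.mpr (h3.trans_lt (by omega))
  · have : Q.eval c = m + 1 := by
      rw [hQ, eval_comp, hyev]
      simp [Polynomial.Chebyshev.U_eval_one]
    rw [eval_pow, eval_mul, eval_C, this]
    field_simp
  · intro x hx
    have key : n * |x - c| * |(C (1 / ((m : ℝ) + 1)) * Q).eval x| ≤ 18 := by
      rw [eval_mul, eval_C, hQ, eval_comp, hyev, abs_mul,
        abs_of_pos (by positivity : 0 < 1 / ((m : ℝ) + 1))]
      set r := |x - c| with hr
      have hr0 : 0 ≤ r := abs_nonneg _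
      have hr2 : r ≤ 2 := by
        rw [hr, abs_le]; constructor <;> linarith [hx.1, hx.2, hc.1, hc.2]
      have hsq : (x - c) ^ 2 = r ^ 2 := by rw [hr, sq_abs]
      rw [hsq]
      set θ := arccos (1 - r ^ 2 / 8) with hθ
      have hcos : cos θ = 1 - r ^ 2 / 8 := cos_arccos (by nlinarith) (by nlinarith)
      have hU := Polynomial.Chebyshev.U_real_cos θ (m : ℤ)
      rw [hcos] at hU
      have hs : r / 3 ≤ |sin θ| := by
        have h1 := sin_sq_add_cos_sq θ
        rw [hcos] at h1
        rw [← abs_of_nonneg (by positivity : 0 ≤ r / 3)]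
        apply sq_le_sq.mp
        have hr4 : 0 ≤ 4 - r ^ 2 := by nlinarith
        nlinarith [mul_nonneg (sq_nonneg r) hr4]
      set u := eval (1 - r ^ 2 / 8) (Polynomial.Chebyshev.U ℝ m) with hu
      have hU1 : |u| * |sin θ| ≤ 1 := by
        rw [← abs_mul, hU]
        exact abs_sin_le_one _
      have hnm : (n : ℝ) * (1 / (m + 1)) ≤ 6 := by
        rw [mul_one_div, div_le_iff₀ hm0]
        exact_mod_cast hm2
      have hru : r * |u| ≤ 3 := by
        nlinarith [mul_le_mul_of_nonneg_right hs (abs_nonneg u)]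
      calc n * r * (1 / ((m : ℝ) + 1) * |u|) = (n * (1 / (m + 1))) * (r * |u|) := by ring
        _ ≤ 6 * 3 := mul_le_mul hnm hru (by positivity) (by norm_num)
        _ = 18 := by norm_num
    have hpos : 0 ≤ n * |x - c| * |(C (1 / ((m : ℝ) + 1)) * Q).eval x| := by positivity
    rw [eval_pow, abs_pow, ← mul_pow]
    calc _ ≤ (18 : ℝ) ^ 3 := pow_le_pow_left₀ hpos key 3
      _ = 5832 := by norm_num

/-! ### The logarithmic kernel -/

/-- The reciprocal of the length of the span of the gaps `j` and `k`, regularized by `ε`. -/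
def kap (z : ℕ → ℝ) (ε : ℝ) (j k : ℕ) : ℝ := 1 / (z (max j k + 1) - z (min j k) + ε)

lemma kap_comm (z : ℕ → ℝ) (ε : ℝ) (j k : ℕ) : kap z ε j k = kap z ε k j := by
  unfold kap; rw [max_comm, min_comm]

lemma kap_of_le (z : ℕ → ℝ) (ε : ℝ) {j k : ℕ} (h : j ≤ k) :
    kap z ε j k = 1 / (z (k + 1) - z j + ε) := by
  unfold kap; rw [max_eq_right h, min_eq_left h]

lemma kap_pos {z : ℕ → ℝ} (hz : StrictMono z) {ε : ℝ} (hε : 0 < ε) (j k : ℕ) :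
    0 < kap z ε j k := by
  have : z (min j k) ≤ z (max j k + 1) := hz.monotone (by omega)
  unfold kap
  apply one_div_pos.mpr
  linarith

lemma row_right_le {z : ℕ → ℝ} (hz : StrictMono z) {ε : ℝ} (hε : 0 < ε) (j : ℕ) {N : ℕ}
    (hN : j ≤ N) :
    ∑ k ∈ Finset.Ico j N, (z (k + 1) - z k) * kap z ε j k ≤ log (z N - z j + ε) - log ε := by
  induction N, hN using Nat.le_induction with
  | base => simp
  | succ N hN ih =>
    rw [Finset.sum_Ico_succ_top hN, kap_of_le z ε hN]
    have h1 : z j ≤ z N := hz.monotone hN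
    have h2 : z N < z (N + 1) := hz (Nat.lt_succ_self N)
    have h := one_sub_inv_le_log_of_pos
      (x := (z (N + 1) - z j + ε) / (z N - z j + ε)) (div_pos (by linarith) (by linarith))
    rw [log_div (by linarith) (by linarith), inv_div] at h
    have e : (z (N + 1) - z N) * (1 / (z (N + 1) - z j + ε))
        = 1 - (z N - z j + ε) / (z (N + 1) - z j + ε) := by
      have : z (N + 1) - z j + ε ≠ 0 := by linarith
      field_simp
      ring
    linarith

lemma row_left_le {z : ℕ → ℝ} (hz : StrictMono z) {ε : ℝ} (hε : 0 < ε) (j : ℕ) {i : ℕ}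
    (hi : i ≤ j) :
    ∑ k ∈ Finset.range i, (z (k + 1) - z k) * kap z ε j k
      ≤ log (z (j + 1) - z 0 + ε) - log (z (j + 1) - z i + ε) := by
  induction i with
  | zero => simp
  | succ i ih =>
    have ih := ih (by omega)
    rw [Finset.sum_range_succ, kap_comm, kap_of_le z ε (by omega : i ≤ j)]
    have h1 : z (i + 1) < z (j + 1) := hz (by omega)
    have h2 : z i < z (i + 1) := hz (Nat.lt_succ_self i)
    have h := one_sub_inv_le_log_of_pos
      (x := (z (j + 1) - z i + ε) / (z (j + 1) - z (i + 1) + ε))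
      (div_pos (by linarith) (by linarith))
    rw [log_div (by linarith) (by linarith), inv_div] at h
    have e : (z (i + 1) - z i) * (1 / (z (j + 1) - z i + ε))
        = 1 - (z (j + 1) - z (i + 1) + ε) / (z (j + 1) - z i + ε) := by
      have : z (j + 1) - z i + ε ≠ 0 := by linarith
      field_simp
      ring
    linarith

/-- The kernel is a lower Riemann sum of `1 / (t + ε)` on either side of the gap `j`. -/
lemma row_le {z : ℕ → ℝ} (hz : StrictMono z) {ε : ℝ} (hε : 0 < ε) {j N : ℕ} (hj : j < N) :
    ∑ k ∈ Finset.range N, (z (k + 1) - z k) * kap z ε j k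
      ≤ 2 * (log (z N - z 0 + ε) - log ε) := by
  rw [← Finset.sum_range_add_sum_Ico _ hj.le]
  have h1 := row_left_le hz hε j le_rfl
  have h2 := row_right_le hz hε j hj.le
  have m1 : z 0 ≤ z j := hz.monotone (Nat.zero_le _)
  have m2 : z j < z (j + 1) := hz (Nat.lt_succ_self j)
  have m3 : z (j + 1) ≤ z N := hz.monotone hj
  have l1 : log (z (j + 1) - z 0 + ε) ≤ log (z N - z 0 + ε) :=
    log_le_log (by linarith) (by linarith)
  have l2 : log ε ≤ log (z (j + 1) - z j + ε) := log_le_log hε (by linarith)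
  have l3 : log (z N - z j + ε) ≤ log (z N - z 0 + ε) :=
    log_le_log (by linarith) (by linarith)
  linarith

/-- Lower Riemann sum of `1 / (t + ε)`: the kernel is evaluated at the far end of each gap, and the
loss against the integral is quadratic in the gaps. -/
lemma row_right_ge {z : ℕ → ℝ} (hz : StrictMono z) {ε : ℝ} (hε : 0 < ε) (j : ℕ) {N : ℕ}
    (hN : j ≤ N) :
    log (z N - z j + ε) - log ε
      - ∑ k ∈ Finset.Ico j N, (z (k + 1) - z k) ^ 2 * (1 / ((z k - z j + ε) * (z (k + 1) - z j + ε)))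
      ≤ ∑ k ∈ Finset.Ico j N, (z (k + 1) - z k) * kap z ε j k := by
  induction N, hN using Nat.le_induction with
  | base => simp
  | succ N hN ih =>
    rw [Finset.sum_Ico_succ_top hN, Finset.sum_Ico_succ_top hN, kap_of_le z ε hN]
    have h1 : z j ≤ z N := hz.monotone hN
    have h2 : z N < z (N + 1) := hz (Nat.lt_succ_self N)
    have h := log_le_sub_one_of_pos
      (x := (z (N + 1) - z j + ε) / (z N - z j + ε)) (div_pos (by linarith) (by linarith))
    rw [log_div (by linarith) (by linarith)] at h
    have e : (z (N + 1) - z N) * (1 / (z (N + 1) - z j + ε))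
        + (z (N + 1) - z N) ^ 2 * (1 / ((z N - z j + ε) * (z (N + 1) - z j + ε)))
        = (z (N + 1) - z j + ε) / (z N - z j + ε) - 1 := by
      have : z (N + 1) - z j + ε ≠ 0 := by linarith
      have : z N - z j + ε ≠ 0 := by linarith
      field_simp
      ring
    linarith

/-- The losses in `row_right_ge` that involve the gap `k`, summed over the rows. -/
lemma col_err {z : ℕ → ℝ} (hz : StrictMono z) {ε : ℝ} (hε : 0 < ε) (k : ℕ) :
    ∑ j ∈ Finset.range (k + 1),
      (z (j + 1) - z j) * (1 / ((z k - z j + ε) * (z (k + 1) - z j + ε))) ≤ 2 / ε := by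
  have hk : z k < z (k + 1) := hz (Nat.lt_succ_self k)
  have h1 : ∀ i ≤ k, ∑ j ∈ Finset.range i,
      (z (j + 1) - z j) * (1 / ((z k - z j + ε) * (z (k + 1) - z j + ε)))
        ≤ 1 / (z k - z i + ε) := by
    intro i hi
    induction i with
    | zero =>
      have : z 0 ≤ z k := hz.monotone (Nat.zero_le _)
      simp only [Finset.range_zero, Finset.sum_empty]
      apply le_of_lt (one_div_pos.mpr _)
      linarith
    | succ i ih =>
      have ih := ih (by omega)
      rw [Finset.sum_range_succ]
      have m1 : z (i + 1) ≤ z k := hz.monotone hi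
      have m2 : z i < z (i + 1) := hz (Nat.lt_succ_self i)
      have p1 : 0 < z k - z i + ε := by linarith
      have p2 : 0 < z k - z (i + 1) + ε := by linarith
      have e : 1 / (z k - z (i + 1) + ε) - 1 / (z k - z i + ε)
          = (z (i + 1) - z i) * (1 / ((z k - z i + ε) * (z k - z (i + 1) + ε))) := by
        field_simp
        ring
      have le : (z (i + 1) - z i) * (1 / ((z k - z i + ε) * (z (k + 1) - z i + ε)))
          ≤ (z (i + 1) - z i) * (1 / ((z k - z i + ε) * (z k - z (i + 1) + ε))) := by
        apply mul_le_mul_of_nonneg_left _ (by linarith)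
        apply one_div_le_one_div_of_le (by positivity)
        apply mul_le_mul_of_nonneg_left _ p1.le
        linarith
      linarith
  have h2 := h1 k le_rfl
  rw [Finset.sum_range_succ]
  have h3 : (z (k + 1) - z k) * (1 / ((z k - z k + ε) * (z (k + 1) - z k + ε))) ≤ 1 / ε := by
    rw [mul_one_div, div_le_div_iff₀ (mul_pos (by linarith) (by linarith)) hε]
    nlinarith
  have h4 : 1 / (z k - z k + ε) = 1 / ε := by rw [sub_self, zero_add]
  have h5 : 2 / ε = 1 / ε + 1 / ε := by ring
  linarith

/-- Left Riemann sums of `log (z N - t)` are bounded below, by comparison with the integral of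
`2 - 2 / √(z N - t)`. -/
lemma sum_log_ge {z : ℕ → ℝ} (hz : StrictMono z) {N : ℕ} (hL : z N - z 0 ≤ 2) :
    -6 ≤ ∑ j ∈ Finset.range N, (z (j + 1) - z j) * log (z N - z j) := by
  have h : ∀ i ≤ N, -(4 * (√(z N - z 0) - √(z N - z i)))
      ≤ ∑ j ∈ Finset.range i, (z (j + 1) - z j) * log (z N - z j) := by
    intro i hi
    induction i with
    | zero => simp
    | succ i ih =>
      have ih := ih (by omega)
      rw [Finset.sum_range_succ]
      have m1 : z (i + 1) ≤ z N := hz.monotone hi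
      have m2 : z i < z (i + 1) := hz (Nat.lt_succ_self i)
      set s := √(z N - z i) with hs
      set t := √(z N - z (i + 1)) with ht
      have hs2 : s ^ 2 = z N - z i := sq_sqrt (by linarith)
      have ht2 : t ^ 2 = z N - z (i + 1) := sq_sqrt (by linarith)
      have hs0 : 0 < s := sqrt_pos.mpr (by linarith)
      have ht0 : 0 ≤ t := sqrt_nonneg _
      have hts : t ≤ s := sqrt_le_sqrt (by linarith)
      have hl := one_sub_inv_le_log_of_pos hs0
      have hl2 : log (z N - z i) = 2 * log s := by rw [← hs2, log_pow]; norm_num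
      have hd : z (i + 1) - z i = (s - t) * (s + t) := by nlinarith
      have h1 : (s - t) * (s + t) * (2 * (1 - s⁻¹)) ≤ (s - t) * (s + t) * (2 * log s) := by
        apply mul_le_mul_of_nonneg_left (by linarith)
        exact mul_nonneg (by linarith) (by linarith)
      have h2 : (s + t) * s⁻¹ ≤ 2 := by
        rw [← div_eq_mul_inv, div_le_iff₀ hs0]; linarith
      have h3 := mul_le_mul_of_nonneg_left h2 (by linarith : 0 ≤ s - t)
      have h4 : 0 ≤ (s - t) * (s + t) := mul_nonneg (by linarith) (by linarith)
      rw [hl2, hd]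
      nlinarith
  have h2 := h N le_rfl
  rw [sub_self, sqrt_zero, sub_zero] at h2
  have h3 : √(z N - z 0) ≤ 3 / 2 := by
    rw [sqrt_le_left (by norm_num)]
    linarith
  linarith

lemma sum_gap (z : ℕ → ℝ) (N : ℕ) : ∑ j ∈ Finset.range N, (z (j + 1) - z j) = z N - z 0 :=
  Finset.sum_range_sub z N

/-- By symmetry the double sum is twice the sum over `j ≤ k` minus the diagonal; the part `j ≤ k` is
estimated row by row with `row_right_ge`. -/
lemma double_sum_ge {z : ℕ → ℝ} (hz : StrictMono z) {ε : ℝ} (hε : 0 < ε) {N : ℕ}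
    (hL : z N - z 0 ≤ 2) :
    -(2 * (z N - z 0) * log ε) - 12 - 5 / ε * ∑ j ∈ Finset.range N, (z (j + 1) - z j) ^ 2
      ≤ ∑ j ∈ Finset.range N, (z (j + 1) - z j) *
          ∑ k ∈ Finset.range N, (z (k + 1) - z k) * kap z ε j k := by
  set d : ℕ → ℝ := fun j => z (j + 1) - z j with hd
  have hd0 : ∀ j, 0 < d j := fun j => sub_pos.mpr (hz (Nat.lt_succ_self j))
  set A := ∑ j ∈ Finset.range N, d j * ∑ k ∈ Finset.Ico j N, d k * kap z ε j k with hA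
  set D := ∑ j ∈ Finset.range N, d j ^ 2 with hD
  have hdiag : ∑ j ∈ Finset.range N, d j * (d j * kap z ε j j) ≤ 1 / ε * D := by
    rw [hD, Finset.mul_sum]
    apply Finset.sum_le_sum
    intro j _
    have : kap z ε j j ≤ 1 / ε := by
      rw [kap_of_le z ε le_rfl]
      apply one_div_le_one_div_of_le hε
      linarith [hd0 j, show d j = z (j + 1) - z j from rfl]
    calc d j * (d j * kap z ε j j) = d j ^ 2 * kap z ε j j := by ring
      _ ≤ d j ^ 2 * (1 / ε) := mul_le_mul_of_nonneg_left this (sq_nonneg _)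
      _ = _ := by ring
  have hsym : ∑ j ∈ Finset.range N, d j * ∑ k ∈ Finset.range N, d k * kap z ε j k
      = 2 * A - ∑ j ∈ Finset.range N, d j * (d j * kap z ε j j) := by
    have e1 : ∑ j ∈ Finset.range N, d j * ∑ k ∈ Finset.range N, d k * kap z ε j k
        = ∑ j ∈ Finset.range N, d j * ∑ k ∈ Finset.range j, d k * kap z ε j k + A := by
      rw [hA, ← Finset.sum_add_distrib]
      apply Finset.sum_congr rfl
      intro j hj
      rw [← mul_add, Finset.sum_range_add_sum_Ico _ (Finset.mem_range.mp hj).le]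
    have e2 : ∑ j ∈ Finset.range N, d j * ∑ k ∈ Finset.range j, d k * kap z ε j k
        = ∑ j ∈ Finset.range N, d j * ∑ k ∈ Finset.Ico (j + 1) N, d k * kap z ε j k := by
      simp only [Finset.mul_sum]
      rw [Finset.sum_comm' (t' := Finset.range N) (s' := fun k => Finset.Ico (k + 1) N)]
      · apply Finset.sum_congr rfl
        intro j _
        apply Finset.sum_congr rfl
        intro k _
        rw [kap_comm]; ring
      · intro j k
        simp only [Finset.mem_range, Finset.mem_Ico]
        omega
    have e3 : A = ∑ j ∈ Finset.range N, d j * (d j * kap z ε j j)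
        + ∑ j ∈ Finset.range N, d j * ∑ k ∈ Finset.Ico (j + 1) N, d k * kap z ε j k := by
      rw [hA, ← Finset.sum_add_distrib]
      apply Finset.sum_congr rfl
      intro j hj
      rw [← mul_add, Finset.sum_eq_sum_Ico_succ_bot (Finset.mem_range.mp hj)]
    rw [e1, e2]
    linarith
  have hAge : -6 - (z N - z 0) * log ε - 2 / ε * D ≤ A := by
    have h1 : ∀ j ∈ Finset.range N, d j * log (z N - z j) - d j * log ε
        - d j * ∑ k ∈ Finset.Ico j N, d k ^ 2 * (1 / ((z k - z j + ε) * (z (k + 1) - z j + ε)))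
        ≤ d j * ∑ k ∈ Finset.Ico j N, d k * kap z ε j k := by
      intro j hj
      have hjN := Finset.mem_range.mp hj
      have h := row_right_ge hz hε j hjN.le
      have hl : log (z N - z j) ≤ log (z N - z j + ε) :=
        log_le_log (sub_pos.mpr (hz hjN)) (by linarith)
      rw [← mul_sub, ← mul_sub]
      apply mul_le_mul_of_nonneg_left _ (hd0 j).le
      linarith
    have h2 := Finset.sum_le_sum h1
    rw [Finset.sum_sub_distrib, Finset.sum_sub_distrib, ← Finset.sum_mul] at h2
    have h3 : ∑ j ∈ Finset.range N, d j *
        ∑ k ∈ Finset.Ico j N, d k ^ 2 * (1 / ((z k - z j + ε) * (z (k + 1) - z j + ε)))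
        ≤ 2 / ε * D := by
      simp only [Finset.mul_sum]
      rw [Finset.sum_comm' (t' := Finset.range N) (s' := fun k => Finset.range (k + 1))]
      · rw [hD, Finset.mul_sum]
        apply Finset.sum_le_sum
        intro k _
        have := mul_le_mul_of_nonneg_left (col_err hz hε k) (sq_nonneg (d k))
        rw [Finset.mul_sum] at this
        calc _ = ∑ j ∈ Finset.range (k + 1), d k ^ 2 *
              ((z (j + 1) - z j) * (1 / ((z k - z j + ε) * (z (k + 1) - z j + ε)))) := by
              apply Finset.sum_congr rfl
              intro j _
              simp only [hd]; ring
          _ ≤ _ := this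
          _ = _ := by ring
      · intro j k
        simp only [Finset.mem_range, Finset.mem_Ico]
        omega
    have h4 := sum_log_ge hz hL
    have h5 : ∑ j ∈ Finset.range N, d j = z N - z 0 := sum_gap z N
    rw [h5] at h2
    linarith
  rw [hsym]
  have : 5 / ε * D = 2 * (2 / ε * D) + 1 / ε * D := by ring
  linarith

/-! ### The local gain of a gap -/

/-- Lower bound for the logarithm of `π W(c_j) √(m_j m_{j+1}) / d_j` obtained from the `M` nearest
nodes on each side of the gap `j` among `z 0, …, z N`. The exact contribution of a node at distance
`S` beyond the gap is `phi (S / d_j)`; it is replaced by the tangent to `phi` at the index distance. -/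
def beta (z : ℕ → ℝ) (N M j : ℕ) : ℝ :=
  log (π / 4) + ∑ m ∈ Finset.range M,
    ((if j + 1 + (m + 1) ≤ N then
        tau (m + 1) - psi (m + 1) * ((z (j + 1 + (m + 1)) - z (j + 1)) / (z (j + 1) - z j))
      else 0) +
     (if m + 1 ≤ j then
        tau (m + 1) - psi (m + 1) * ((z j - z (j - (m + 1))) / (z (j + 1) - z j))
      else 0))

lemma beta_le {z : ℕ → ℝ} (hz : StrictMono z) (N M j : ℕ) : beta z N M j ≤ 2 := by
  have hlog : log (π / 4) ≤ 0 := log_nonpos (by positivity) (by linarith [pi_le_four])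
  have hd : 0 < z (j + 1) - z j := sub_pos.mpr (hz (Nat.lt_succ_self j))
  have h : ∀ m ∈ Finset.range M,
    ((if j + 1 + (m + 1) ≤ N then
        tau (m + 1) - psi (m + 1) * ((z (j + 1 + (m + 1)) - z (j + 1)) / (z (j + 1) - z j))
      else 0) +
     (if m + 1 ≤ j then
        tau (m + 1) - psi (m + 1) * ((z j - z (j - (m + 1))) / (z (j + 1) - z j))
      else 0)) ≤ 2 * tau (m + 1) := by
    intro m _
    have hm : (0 : ℝ) < m + 1 := by positivity
    have ht := tau_nonneg hm
    have hp := psi_nonneg hm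
    have s1 : 0 ≤ (z (j + 1 + (m + 1)) - z (j + 1)) / (z (j + 1) - z j) :=
      div_nonneg (sub_nonneg.mpr (hz.monotone (by omega))) hd.le
    have s2 : 0 ≤ (z j - z (j - (m + 1))) / (z (j + 1) - z j) :=
      div_nonneg (sub_nonneg.mpr (hz.monotone (by omega))) hd.le
    have t1 := mul_nonneg hp s1
    have t2 := mul_nonneg hp s2
    split_ifs <;> linarith
  have h2 := Finset.sum_le_sum h
  rw [← Finset.mul_sum] at h2
  have h3 := sum_tau_le M
  unfold beta
  linarith

/-- Each gap is covered by at most `m` of the blocks of `m` consecutive gaps. -/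
lemma shift_sum_le {z : ℕ → ℝ} (hz : StrictMono z) {N K a : ℕ} (m : ℕ) (h : K + a + m ≤ N + 1) :
    ∑ i ∈ Finset.range K, (z (i + a + m) - z (i + a)) ≤ m * (z N - z 0) := by
  induction m with
  | zero => simp
  | succ m ih =>
    have ih := ih (by omega)
    have h1 : ∑ i ∈ Finset.range K, (z (i + a + (m + 1)) - z (i + a))
        = ∑ i ∈ Finset.range K, (z (i + a + m) - z (i + a))
          + ∑ i ∈ Finset.range K, (z (i + 1 + (a + m)) - z (i + (a + m))) := by
      rw [← Finset.sum_add_distrib]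
      apply Finset.sum_congr rfl
      intro i _
      have e1 : i + a + (m + 1) = i + 1 + (a + m) := by ring
      have e2 : i + a + m = i + (a + m) := by ring
      rw [e1, e2]; ring
    have h2 := Finset.sum_range_sub (fun i => z (i + (a + m))) K
    have m1 : z (K + (a + m)) ≤ z N := hz.monotone (by omega)
    have m2 : z 0 ≤ z (0 + (a + m)) := hz.monotone (by omega)
    rw [h1, h2]
    push_cast
    linarith

lemma gap_block_le {z : ℕ → ℝ} {N : ℕ} {g : ℝ} (hg : ∀ j < N, z (j + 1) - z j ≤ g) (i m : ℕ)
    (h : i + m ≤ N) : z (i + m) - z i ≤ m * g := by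
  induction m with
  | zero => simp
  | succ m ih =>
    have := ih (by omega)
    have h2 := hg (i + m) (by omega)
    push_cast
    have e : i + (m + 1) = i + m + 1 := rfl
    rw [e]
    linarith

/-- Contribution to `∑ d_j β_j` of the blocks of `m` consecutive gaps on the right. -/
lemma beta_right {z : ℕ → ℝ} (hz : StrictMono z) {N : ℕ} {g : ℝ}
    (hg : ∀ j < N, z (j + 1) - z j ≤ g) (m : ℕ) {t p : ℝ} (ht : 0 ≤ t) (hp : 0 ≤ p) (hg0 : 0 ≤ g) :
    t * (z N - z 0 - m * g) - p * (m * (z N - z 0)) ≤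
      ∑ j ∈ Finset.range N, (z (j + 1) - z j) * (if j + 1 + m ≤ N then
        t - p * ((z (j + 1 + m) - z (j + 1)) / (z (j + 1) - z j)) else 0) := by
  have e : ∑ j ∈ Finset.range N, (z (j + 1) - z j) * (if j + 1 + m ≤ N then
        t - p * ((z (j + 1 + m) - z (j + 1)) / (z (j + 1) - z j)) else 0)
      = t * ∑ j ∈ Finset.range (N - m), (z (j + 1) - z j)
        - p * ∑ j ∈ Finset.range (N - m), (z (j + 1 + m) - z (j + 1)) := by
    rw [Finset.mul_sum, Finset.mul_sum, ← Finset.sum_sub_distrib]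
    symm
    apply Finset.sum_subset_zero_on_sdiff
    · intro j hj
      simp only [Finset.mem_range] at hj ⊢
      omega
    · intro j hj
      simp only [Finset.mem_sdiff, Finset.mem_range] at hj
      rw [if_neg (by omega), mul_zero]
    · intro j hj
      simp only [Finset.mem_range] at hj
      have hd : z (j + 1) - z j ≠ 0 := (sub_pos.mpr (hz (Nat.lt_succ_self j))).ne'
      rw [if_pos (by omega)]
      field_simp
  rw [e, sum_gap]
  have hL : 0 ≤ z N - z 0 := sub_nonneg.mpr (hz.monotone (Nat.zero_le _))
  by_cases hN : m ≤ N
  · have h1 := shift_sum_le hz (N := N) (K := N - m) (a := 1) m (by omega)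
    have h2 := gap_block_le hg (N - m) m (by omega)
    rw [Nat.sub_add_cancel hN] at h2
    have h3 := mul_le_mul_of_nonneg_left h1 hp
    have h4 := mul_le_mul_of_nonneg_left (by linarith : z N - z 0 - m * g ≤ z (N - m) - z 0) ht
    linarith
  · have h2 := gap_block_le hg 0 N (by omega)
    rw [Nat.sub_eq_zero_of_le (by omega)]
    rw [zero_add] at h2
    have hNm : (N : ℝ) ≤ m := by exact_mod_cast (by omega : N ≤ m)
    have h3 := mul_le_mul_of_nonneg_right hNm hg0
    have h4 := mul_nonneg hp (mul_nonneg (Nat.cast_nonneg m) hL)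
    have h5 := mul_nonneg ht (by linarith : 0 ≤ m * g - (z N - z 0))
    simp only [Finset.range_zero, Finset.sum_empty]
    linarith

/-- Contribution to `∑ d_j β_j` of the blocks of `m` consecutive gaps on the left. -/
lemma beta_left {z : ℕ → ℝ} (hz : StrictMono z) {N : ℕ} {g : ℝ}
    (hg : ∀ j < N, z (j + 1) - z j ≤ g) (m : ℕ) {t p : ℝ} (ht : 0 ≤ t) (hp : 0 ≤ p) (hg0 : 0 ≤ g) :
    t * (z N - z 0 - m * g) - p * (m * (z N - z 0)) ≤
      ∑ j ∈ Finset.range N, (z (j + 1) - z j) * (if m ≤ j then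
        t - p * ((z j - z (j - m)) / (z (j + 1) - z j)) else 0) := by
  have e : ∑ j ∈ Finset.range N, (z (j + 1) - z j) * (if m ≤ j then
        t - p * ((z j - z (j - m)) / (z (j + 1) - z j)) else 0)
      = t * ∑ j ∈ Finset.range (N - m), (z (j + 1 + m) - z (j + m))
        - p * ∑ j ∈ Finset.range (N - m), (z (j + 0 + m) - z (j + 0)) := by
    rw [Finset.mul_sum, Finset.mul_sum, ← Finset.sum_sub_distrib]
    have e1 : ∑ j ∈ Finset.range N, (z (j + 1) - z j) * (if m ≤ j then
        t - p * ((z j - z (j - m)) / (z (j + 1) - z j)) else 0)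
        = ∑ j ∈ Finset.Ico m N, (z (j + 1) - z j) * (if m ≤ j then
        t - p * ((z j - z (j - m)) / (z (j + 1) - z j)) else 0) := by
      symm
      apply Finset.sum_subset
      · intro j hj
        simp only [Finset.mem_range, Finset.mem_Ico] at hj ⊢
        omega
      · intro j _ hj
        simp only [Finset.mem_range, Finset.mem_Ico] at *
        rw [if_neg (by omega), mul_zero]
    rw [e1, Finset.sum_Ico_eq_sum_range]
    apply Finset.sum_congr rfl
    intro j hj
    have hd : z (m + j + 1) - z (m + j) ≠ 0 := (sub_pos.mpr (hz (Nat.lt_succ_self _))).ne'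
    rw [if_pos (by omega)]
    have e1 : j + 1 + m = m + j + 1 := by ring
    have e2 : j + m = m + j := by ring
    have e3 : m + j - m = j := by omega
    rw [e1, add_zero, e2, e3]
    field_simp
  rw [e]
  have hL : 0 ≤ z N - z 0 := sub_nonneg.mpr (hz.monotone (Nat.zero_le _))
  rw [Finset.sum_range_sub (fun i => z (i + m))]
  by_cases hN : m ≤ N
  · have h1 := shift_sum_le hz (N := N) (K := N - m) (a := 0) m (by omega)
    have h2 := gap_block_le hg 0 m (by omega)
    rw [Nat.sub_add_cancel hN]
    have h3 := mul_le_mul_of_nonneg_left h1 hp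
    have h4 := mul_le_mul_of_nonneg_left (by linarith : z N - z 0 - m * g ≤ z N - z (0 + m)) ht
    linarith
  · have h2 := gap_block_le hg 0 N (by omega)
    rw [Nat.sub_eq_zero_of_le (by omega)]
    rw [zero_add] at h2
    have hNm : (N : ℝ) ≤ m := by exact_mod_cast (by omega : N ≤ m)
    have h3 := mul_le_mul_of_nonneg_right hNm hg0
    have h4 := mul_nonneg hp (mul_nonneg (Nat.cast_nonneg m) hL)
    have h5 := mul_nonneg ht (by linarith : 0 ≤ m * g - (z N - z 0))
    simp only [Finset.range_zero, Finset.sum_empty]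
    linarith

/-- In the average with weights `d_j`, each normalized block of `m` gaps counts for at most `m`, which
leaves `tau m - m * psi m = phi m` from each side; the Wallis product then cancels `log (π / 4)`. -/
lemma sum_beta_ge {z : ℕ → ℝ} (hz : StrictMono z) {N : ℕ} {g : ℝ}
    (hg : ∀ j < N, z (j + 1) - z j ≤ g) (hg0 : 0 ≤ g) (M : ℕ) :
    -((z N - z 0) / (M + 1) + 2 * g * M) ≤
      ∑ j ∈ Finset.range N, (z (j + 1) - z j) * beta z N M j := by
  have hL : 0 ≤ z N - z 0 := sub_nonneg.mpr (hz.monotone (Nat.zero_le _))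
  simp only [beta, mul_add, Finset.sum_add_distrib, Finset.mul_sum]
  rw [← Finset.sum_mul, sum_gap, Finset.sum_comm,
    Finset.sum_comm (s := Finset.range N) (t := Finset.range M)]
  have hm : ∀ m ∈ Finset.range M, (z N - z 0) * phi (m + 1) - g ≤
      ∑ j ∈ Finset.range N, (z (j + 1) - z j) * (if j + 1 + (m + 1) ≤ N then
        tau (m + 1) - psi (m + 1) * ((z (j + 1 + (m + 1)) - z (j + 1)) / (z (j + 1) - z j))
        else 0) := by
    intro m _
    have hm0 : (0 : ℝ) < m + 1 := by positivity
    have h := beta_right hz hg (m + 1) (tau_nonneg hm0) (psi_nonneg hm0) hg0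
    have h2 := mul_tau_le_one (s := (m : ℝ) + 1) (by linarith [(Nat.cast_nonneg m : (0 : ℝ) ≤ m)])
    have h3 := mul_le_mul_of_nonneg_right h2 hg0
    refine le_trans ?_ h
    push_cast
    unfold tau at *
    linarith
  have hm' : ∀ m ∈ Finset.range M, (z N - z 0) * phi (m + 1) - g ≤
      ∑ j ∈ Finset.range N, (z (j + 1) - z j) * (if m + 1 ≤ j then
        tau (m + 1) - psi (m + 1) * ((z j - z (j - (m + 1))) / (z (j + 1) - z j))
        else 0) := by
    intro m _
    have hm0 : (0 : ℝ) < m + 1 := by positivity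
    have h := beta_left hz hg (m + 1) (tau_nonneg hm0) (psi_nonneg hm0) hg0
    have h2 := mul_tau_le_one (s := (m : ℝ) + 1) (by linarith [(Nat.cast_nonneg m : (0 : ℝ) ≤ m)])
    have h3 := mul_le_mul_of_nonneg_right h2 hg0
    refine le_trans ?_ h
    push_cast
    unfold tau at *
    linarith
  have s1 := Finset.sum_le_sum hm
  have s2 := Finset.sum_le_sum hm'
  rw [Finset.sum_sub_distrib, ← Finset.mul_sum, Finset.sum_const, Finset.card_range,
    nsmul_eq_mul] at s1 s2
  have hw := mul_le_mul_of_nonneg_left (wallis_phi M) hL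
  have hlog : log (π / 4) = - log (4 / π) := by
    rw [← log_inv, inv_div]
  rw [hlog]
  have e : (z N - z 0) / (M + 1) = (z N - z 0) * (1 / ((M : ℝ) + 1)) := by ring
  rw [e]
  linarith

/-! ### Lebesgue functions and test polynomials -/

/-- The Lebesgue function of the nodes `y 0, …, y (n - 1)`. The nodes are given by a sequence on `ℕ`,
of which only the first `n` terms are used. -/
def lam (n : ℕ) (y : ℕ → ℝ) (t : ℝ) : ℝ :=
  ∑ k ∈ Finset.range n, |∏ i ∈ (Finset.range n).erase k, (t - y i) / (y k - y i)|

/-- The modulus of the node polynomial at `t`. -/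
def nodeDist (n : ℕ) (y : ℕ → ℝ) (t : ℝ) : ℝ := ∏ i ∈ Finset.range n, |t - y i|

/-- The modulus of the barycentric weight of the node `y k`. -/
def nodeWt (n : ℕ) (y : ℕ → ℝ) (k : ℕ) : ℝ :=
  (∏ i ∈ (Finset.range n).erase k, |y k - y i|)⁻¹

lemma nodeWt_pos {y : ℕ → ℝ} (hy : StrictMono y) (n k : ℕ) : 0 < nodeWt n y k := by
  unfold nodeWt
  apply inv_pos.mpr
  apply Finset.prod_pos
  intro i hi
  exact abs_pos.mpr (sub_ne_zero.mpr (hy.injective.ne (Finset.ne_of_mem_erase hi).symm))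

lemma abs_basis_eq {n : ℕ} {y : ℕ → ℝ} {t : ℝ} {k : ℕ} (hk : k < n) (ht : t ≠ y k) :
    |∏ i ∈ (Finset.range n).erase k, (t - y i) / (y k - y i)|
      = nodeDist n y t * nodeWt n y k / |t - y k| := by
  have h0 : |t - y k| ≠ 0 := abs_ne_zero.mpr (sub_ne_zero.mpr ht)
  rw [Finset.abs_prod, nodeDist, nodeWt, ← Finset.mul_prod_erase _ _ (Finset.mem_range.mpr hk)]
  simp only [abs_div, Finset.prod_div_distrib]
  field_simp

open Polynomial in
/-- Lagrange interpolation of a polynomial of degree less than `n`, with absolute values. -/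
lemma abs_eval_le {n : ℕ} {y : ℕ → ℝ} (hy : StrictMono y) (P : ℝ[X]) (hP : P.degree < n) (t : ℝ) :
    |P.eval t| ≤ ∑ k ∈ Finset.range n,
      |P.eval (y k)| * |∏ i ∈ (Finset.range n).erase k, (t - y i) / (y k - y i)| := by
  have h := Lagrange.eq_interpolate (s := Finset.range n) (v := y) (f := P)
    (hy.injective.injOn) (by simpa using hP)
  have h2 : P.eval t = ∑ k ∈ Finset.range n,
      P.eval (y k) * ∏ i ∈ (Finset.range n).erase k, (t - y i) / (y k - y i) := by
    conv_lhs => rw [h]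
    rw [Lagrange.interpolate_apply, eval_finsetSum]
    apply Finset.sum_congr rfl
    intro k _
    rw [eval_mul, eval_C, Lagrange.basis, eval_prod]
    congr 1
    apply Finset.prod_congr rfl
    intro i _
    rw [Lagrange.basisDivisor]
    simp only [eval_mul, eval_C, eval_sub, eval_X]
    ring
  rw [h2]
  refine (Finset.abs_sum_le_sum_abs _ _).trans (le_of_eq ?_)
  simp only [abs_mul]

/-- The Lebesgue function is large away from the nodes: the peaking polynomial at `c` has value `1`
there and is at most `5832 / (n ρ) ^ 3` in modulus at all the nodes. -/
lemma lam_ge_of_far {n : ℕ} (hn : 1 ≤ n) {y : ℕ → ℝ} (hy : StrictMono y)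
    (hy1 : ∀ i < n, y i ∈ Set.Icc (-1 : ℝ) 1) {c : ℝ} (hc : c ∈ Set.Icc (-1 : ℝ) 1) {ρ : ℝ}
    (hρ : 0 < ρ) (hfar : ∀ i < n, ρ ≤ |y i - c|) : (n * ρ) ^ 3 / 5832 ≤ lam n y c := by
  obtain ⟨P, hP1, hP2, hP3⟩ := exists_peak n hn c hc
  have hn0 : (0 : ℝ) < n := by exact_mod_cast hn
  have h := abs_eval_le hy P hP1 c
  rw [hP2, abs_one] at h
  rw [div_le_iff₀ (by norm_num)]
  have h2 : ∀ k ∈ Finset.range n,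
      (n * ρ) ^ 3 * (|P.eval (y k)| * |∏ i ∈ (Finset.range n).erase k, (c - y i) / (y k - y i)|)
      ≤ |∏ i ∈ (Finset.range n).erase k, (c - y i) / (y k - y i)| * 5832 := by
    intro k hk
    have hk' := Finset.mem_range.mp hk
    have h3 : (n * ρ) ^ 3 ≤ (n * |y k - c|) ^ 3 := by
      have := hfar k hk'
      gcongr
    have h4 := (mul_le_mul_of_nonneg_right h3 (abs_nonneg (P.eval (y k)))).trans
      (hP3 (y k) (hy1 k hk'))
    have h5 := mul_le_mul_of_nonneg_right h4
      (abs_nonneg (∏ i ∈ (Finset.range n).erase k, (c - y i) / (y k - y i)))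
    linarith
  have h6 := Finset.sum_le_sum h2
  rw [← Finset.mul_sum, ← Finset.sum_mul] at h6
  have h7 := mul_le_mul_of_nonneg_left h (by positivity : 0 ≤ (n * ρ) ^ 3)
  unfold lam
  linarith

/-- The part of the Lebesgue function at `c` that is lost when every `|c - y k|` is replaced by
`|c - y k| + 1 / n`. For `n ρ ≥ 1` the peaking polynomial gives the lower bound
`(n ρ) ^ 2 / 11664`; the statement keeps the tangent `10 n ρ - 291600`
of this parabola. -/
lemma near_sum_ge {n : ℕ} (hn : 1 ≤ n) {y : ℕ → ℝ} (hy : StrictMono y)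
    (hy1 : ∀ i < n, y i ∈ Set.Icc (-1 : ℝ) 1) {c : ℝ} (hc : c ∈ Set.Icc (-1 : ℝ) 1) {ρ : ℝ}
    (hρ : 0 < ρ) (hfar : ∀ i < n, ρ ≤ |y i - c|) :
    10 * (n * ρ) - 291600 ≤ ∑ k ∈ Finset.range n,
      |∏ i ∈ (Finset.range n).erase k, (c - y i) / (y k - y i)| / (1 + n * |c - y k|) := by
  have hn0 : (0 : ℝ) < n := by exact_mod_cast hn
  rcases lt_or_ge (n * ρ) 1 with h1 | h1
  · have : 0 ≤ ∑ k ∈ Finset.range n,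
      |∏ i ∈ (Finset.range n).erase k, (c - y i) / (y k - y i)| / (1 + n * |c - y k|) :=
      Finset.sum_nonneg fun k _ => by positivity
    linarith
  obtain ⟨P, hP1, hP2, hP3⟩ := exists_peak n hn c hc
  have h := abs_eval_le hy P hP1 c
  rw [hP2, abs_one] at h
  have h2 : ∀ k ∈ Finset.range n,
      (n * ρ) ^ 2 * (|P.eval (y k)| * |∏ i ∈ (Finset.range n).erase k, (c - y i) / (y k - y i)|)
      ≤ 11664 *
        (|∏ i ∈ (Finset.range n).erase k, (c - y i) / (y k - y i)| / (1 + n * |c - y k|)) := by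
    intro k hk
    have hk' := Finset.mem_range.mp hk
    have h3 : n * ρ ≤ n * |y k - c| := by
      have := hfar k hk'
      gcongr
    have h4 := hP3 (y k) (hy1 k hk')
    rw [abs_sub_comm c (y k)]
    set s := n * |y k - c| with hs
    set q := |P.eval (y k)| with hq
    have hq0 : 0 ≤ q := abs_nonneg _
    set l := |∏ i ∈ (Finset.range n).erase k, (c - y i) / (y k - y i)| with hl
    have hl0 : 0 ≤ l := abs_nonneg _
    rw [← mul_div_assoc, le_div_iff₀ (by linarith)]
    have h5 : (n * ρ) ^ 2 * (1 + s) ≤ 2 * s ^ 3 := by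
      have : (n * ρ) ^ 2 ≤ s ^ 2 := by gcongr
      calc (n * ρ) ^ 2 * (1 + s) ≤ s ^ 2 * (2 * s) := by gcongr; linarith
        _ = _ := by ring
    have h6 := mul_le_mul_of_nonneg_right h5 (mul_nonneg hq0 hl0)
    have h7 := mul_le_mul_of_nonneg_right h4 hl0
    linarith
  have h6 := Finset.sum_le_sum h2
  rw [← Finset.mul_sum, ← Finset.mul_sum] at h6
  have h7 := mul_le_mul_of_nonneg_left h (by positivity : 0 ≤ (n * ρ) ^ 2)
  nlinarith [sq_nonneg (n * ρ - 58320)]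

lemma phi_div {S d : ℝ} (hS : 0 < S) (hd : 0 < d) :
    phi (S / d) = log (S + d / 2) - log S / 2 - log (S + d) / 2 := by
  have e1 : S / d + 1 / 2 = (S + d / 2) / d := by field_simp
  have e2 : S / d + 1 = (S + d) / d := by field_simp
  rw [phi, e1, e2, log_div (by positivity) hd.ne', log_div hS.ne' hd.ne',
    log_div (by positivity) hd.ne']
  ring

lemma log_nodeDist {n : ℕ} {y : ℕ → ℝ} {t : ℝ} (h : ∀ i < n, t ≠ y i) :
    log (nodeDist n y t) = ∑ i ∈ Finset.range n, log (t - y i) := by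
  rw [nodeDist, log_prod]
  · simp only [log_abs]
  · intro i hi
    exact abs_ne_zero.mpr (sub_ne_zero.mpr (h i (Finset.mem_range.mp hi)))

lemma log_nodeWt {n : ℕ} {y : ℕ → ℝ} (hy : StrictMono y) {k : ℕ} (hk : k < n) :
    log (nodeWt n y k) = -∑ i ∈ Finset.range n, log (y k - y i) := by
  rw [nodeWt, log_inv, log_prod]
  · -- the term `i = k` is `log 0 = 0`
    rw [← Finset.add_sum_erase _ _ (Finset.mem_range.mpr hk), sub_self, log_zero, zero_add]
    simp only [log_abs]
  · intro i hi
    exact abs_ne_zero.mpr (sub_ne_zero.mpr (hy.injective.ne (Finset.ne_of_mem_erase hi).symm))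

/-- The logarithm of `π W(c_j) √(m_j m_{j+1}) / d_j` is a sum of contributions of the single nodes. The
two endpoints of the gap contribute `log (π / 4)` in all; every other node contributes a value of
`phi`, which is nonnegative and lies above its tangents. -/
lemma beta_le_log {n : ℕ} {y : ℕ → ℝ} (hy : StrictMono y) {p N : ℕ} (hpN : p + N < n) (M : ℕ)
    {j : ℕ} (hj : j < N) :
    beta (fun i => y (p + i)) N M j ≤ log (nodeDist n y ((y (p + j) + y (p + j + 1)) / 2))
      + log (nodeWt n y (p + j)) / 2 + log (nodeWt n y (p + j + 1)) / 2
      + log π - log (y (p + j + 1) - y (p + j)) := by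
  set a := p + j with ha
  set d := y (a + 1) - y a with hd
  have hd0 : 0 < d := sub_pos.mpr (hy (Nat.lt_succ_self a))
  set c := (y a + y (a + 1)) / 2 with hc
  have hcne : ∀ i < n, c ≠ y i := by
    intro i _ h
    rcases Nat.lt_or_ge a i with h1 | h1
    · have := hy.monotone (by omega : a + 1 ≤ i)
      linarith
    · have := hy.monotone h1
      linarith
  rw [log_nodeDist hcne, log_nodeWt hy (by omega), log_nodeWt hy (by omega)]
  set F : ℕ → ℝ := fun i => log (c - y i) - log (y a - y i) / 2 - log (y (a + 1) - y i) / 2 with hF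
  have hFsum : ∑ i ∈ Finset.range n, log (c - y i)
      + -(∑ i ∈ Finset.range n, log (y a - y i)) / 2
      + -(∑ i ∈ Finset.range n, log (y (a + 1) - y i)) / 2 = ∑ i ∈ Finset.range n, F i := by
    simp only [hF, Finset.sum_sub_distrib, ← Finset.sum_div]
    ring
  rw [hFsum]
  have hFr : ∀ i, a + 2 ≤ i → F i = phi ((y i - y (a + 1)) / d) := by
    intro i hi
    have hS : 0 < y i - y (a + 1) := sub_pos.mpr (hy (by omega))
    rw [phi_div hS hd0, hF]
    simp only
    rw [← log_neg_eq_log (c - y i), ← log_neg_eq_log (y a - y i),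
      ← log_neg_eq_log (y (a + 1) - y i)]
    have e1 : -(c - y i) = y i - y (a + 1) + d / 2 := by rw [hc, hd]; ring
    have e2 : -(y a - y i) = y i - y (a + 1) + d := by rw [hd]; ring
    have e3 : -(y (a + 1) - y i) = y i - y (a + 1) := by ring
    rw [e1, e2, e3]
    ring
  have hFl : ∀ i, i < a → F i = phi ((y a - y i) / d) := by
    intro i hi
    have hS : 0 < y a - y i := sub_pos.mpr (hy hi)
    rw [phi_div hS hd0, hF]
    simp only
    have e1 : c - y i = y a - y i + d / 2 := by rw [hc, hd]; ring
    have e2 : y (a + 1) - y i = y a - y i + d := by rw [hd]; ring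
    rw [e1, e2]
  have hFa : F a + F (a + 1) - log d = -log 4 := by
    have e1 : c - y a = d / 2 := by rw [hc, hd]; ring
    have e2 : c - y (a + 1) = -(d / 2) := by rw [hc, hd]; ring
    have e3 : y a - y (a + 1) = -d := by rw [hd]; ring
    simp only [hF]
    rw [e1, e2, e3, ← hd, sub_self, sub_self, log_neg_eq_log, log_neg_eq_log,
      log_div hd0.ne' two_ne_zero, log_zero]
    have : log (4 : ℝ) = 2 * log 2 := by
      rw [show (4 : ℝ) = 2 ^ 2 by norm_num, log_pow]; norm_num
    rw [this]; ring
  have hsplit : ∑ i ∈ Finset.range n, F i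
      = ∑ i ∈ Finset.range a, F i + (F a + F (a + 1)) + ∑ i ∈ Finset.Ico (a + 2) n, F i := by
    rw [← Finset.sum_range_add_sum_Ico F (by omega : a + 2 ≤ n), Finset.sum_range_succ,
      Finset.sum_range_succ]
    ring
  have hR : ∑ m ∈ Finset.range M, (if j + 1 + (m + 1) ≤ N then F (a + 2 + m) else 0)
      ≤ ∑ i ∈ Finset.Ico (a + 2) n, F i := by
    rw [← Finset.sum_filter, ← Finset.sum_image (f := F) (g := fun m => a + 2 + m)
      (fun x _ x' _ h => by simpa using h)]
    apply Finset.sum_le_sum_of_subset_of_nonneg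
    · intro i hi
      simp only [Finset.mem_image, Finset.mem_filter, Finset.mem_range, Finset.mem_Ico] at hi ⊢
      omega
    · intro i hi _
      have hi' := (Finset.mem_Ico.mp hi).1
      rw [hFr i hi']
      exact phi_nonneg (div_pos (sub_pos.mpr (hy (by omega))) hd0)
  have hLf : ∑ m ∈ Finset.range M, (if m + 1 ≤ j then F (a - (m + 1)) else 0)
      ≤ ∑ i ∈ Finset.range a, F i := by
    rw [← Finset.sum_filter, ← Finset.sum_image (f := F) (g := fun m => a - (m + 1))]
    · apply Finset.sum_le_sum_of_subset_of_nonneg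
      · intro i hi
        simp only [Finset.mem_image, Finset.mem_filter, Finset.mem_range] at hi ⊢
        omega
      · intro i hi _
        have hi' := Finset.mem_range.mp hi
        rw [hFl i hi']
        exact phi_nonneg (div_pos (sub_pos.mpr (hy hi')) hd0)
    · intro x hx x' hx' h
      simp only [Finset.coe_filter, Set.mem_ofPred_eq] at hx hx' h
      omega
  have hsum : ∑ m ∈ Finset.range M,
      ((if j + 1 + (m + 1) ≤ N then tau (m + 1) - psi (m + 1) *
          ((y (p + (j + 1 + (m + 1))) - y (p + (j + 1))) / (y (p + (j + 1)) - y (p + j)))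
        else 0) +
       (if m + 1 ≤ j then tau (m + 1) - psi (m + 1) *
          ((y (p + j) - y (p + (j - (m + 1)))) / (y (p + (j + 1)) - y (p + j)))
        else 0))
      ≤ ∑ m ∈ Finset.range M, (if j + 1 + (m + 1) ≤ N then F (a + 2 + m) else 0)
        + ∑ m ∈ Finset.range M, (if m + 1 ≤ j then F (a - (m + 1)) else 0) := by
    rw [← Finset.sum_add_distrib]
    apply Finset.sum_le_sum
    intro m _
    have hm0 : (0 : ℝ) < m + 1 := by positivity
    have i1 : p + (j + 1) = a + 1 := by omega
    rw [i1, ← ha, ← hd]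
    apply add_le_add
    · split_ifs with h
      · have i2 : p + (j + 1 + (m + 1)) = a + 2 + m := by omega
        rw [i2, hFr _ (by omega)]
        exact phi_tangent hm0 (div_pos (sub_pos.mpr (hy (by omega))) hd0)
      · exact le_rfl
    · split_ifs with h
      · have i2 : p + (j - (m + 1)) = a - (m + 1) := by omega
        rw [i2, hFl _ (by omega)]
        exact phi_tangent hm0 (div_pos (sub_pos.mpr (hy (by omega))) hd0)
      · exact le_rfl
  have hlog : log (π / 4) = log π - log 4 := log_div pi_ne_zero (by norm_num)
  unfold beta
  rw [hlog]
  linarith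

/-! ### Averaging over the gaps -/

/-- Uses `1 / r = 1 / (r + 1 / n) + 1 / (r (1 + n r))` for each distance `r = |c - y k|`. -/
lemma lam_split {n : ℕ} (hn : 1 ≤ n) {y : ℕ → ℝ} {c : ℝ} (hc : ∀ i < n, c ≠ y i) :
    lam n y c = ∑ k ∈ Finset.range n, nodeDist n y c * nodeWt n y k / (|c - y k| + 1 / n)
      + ∑ k ∈ Finset.range n,
        |∏ i ∈ (Finset.range n).erase k, (c - y i) / (y k - y i)| / (1 + n * |c - y k|) := by
  have hn0 : (0 : ℝ) < n := by exact_mod_cast hn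
  rw [lam, ← Finset.sum_add_distrib]
  refine Finset.sum_congr rfl fun k hk => ?_
  have hk' := Finset.mem_range.mp hk
  have hr : 0 < |c - y k| := abs_pos.mpr (sub_ne_zero.mpr (hc k hk'))
  rw [abs_basis_eq hk' (hc k hk')]
  field_simp
  ring

lemma pair_sum_le {n p N : ℕ} (hpN : p + N < n) {f : ℕ → ℝ} (hf : ∀ k < n, 0 ≤ f k) :
    ∑ k ∈ Finset.range N, (f (p + k) + f (p + k + 1)) / 2 ≤ ∑ k ∈ Finset.range n, f k := by
  have key : ∀ q, q + N ≤ n → ∑ k ∈ Finset.range N, f (q + k) ≤ ∑ k ∈ Finset.range n, f k := by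
    intro q hq
    rw [← Finset.sum_image (f := f) (g := fun m => q + m) (fun x _ x' _ h => by simpa using h)]
    apply Finset.sum_le_sum_of_subset_of_nonneg
    · intro i hi
      simp only [Finset.mem_image, Finset.mem_range] at hi ⊢
      omega
    · intro i hi _
      exact hf i (Finset.mem_range.mp hi)
  have h1 := key p (by omega)
  have h2 := key (p + 1) (by omega)
  have e : ∀ k, p + 1 + k = p + k + 1 := fun k => by omega
  simp only [e] at h2
  rw [← Finset.sum_div, Finset.sum_add_distrib]
  linarith

lemma exp_mean_le {a b : ℝ} (ha : 0 < a) (hb : 0 < b) :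
    exp (log a / 2 + log b / 2) ≤ (a + b) / 2 := by
  have e1 : a = exp (log a / 2) ^ 2 := by
    rw [← exp_nat_mul]; push_cast; rw [mul_div_cancel₀ _ two_ne_zero, exp_log ha]
  have e2 : b = exp (log b / 2) ^ 2 := by
    rw [← exp_nat_mul]; push_cast; rw [mul_div_cancel₀ _ two_ne_zero, exp_log hb]
  rw [exp_add]
  nlinarith [sq_nonneg (exp (log a / 2) - exp (log b / 2))]

/-- Linearization of the regularized part of `λ(c_j)`: consecutive nodes are paired by the inequality
of arithmetic and geometric means, and `exp t ≥ 1 + t` is applied with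
`t = log (π W(c_j) √(m_k m_{k+1}) / d_k)`, which splits into a function of `j` and a function of `k`. -/
lemma far_sum_ge {n : ℕ} (hn : 1 ≤ n) {y : ℕ → ℝ} (hy : StrictMono y) {p N : ℕ}
    (hpN : p + N < n) (j : ℕ) :
    ∑ k ∈ Finset.range N, (y (p + k + 1) - y (p + k)) * kap (fun i => y (p + i)) (1 / n) j k *
      (1 + log (nodeDist n y ((y (p + j) + y (p + j + 1)) / 2))
        - (log (y (p + k + 1) - y (p + k)) - log π - log (nodeWt n y (p + k)) / 2
          - log (nodeWt n y (p + k + 1)) / 2))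
      ≤ π * ∑ k ∈ Finset.range n, nodeDist n y ((y (p + j) + y (p + j + 1)) / 2) * nodeWt n y k /
          (|(y (p + j) + y (p + j + 1)) / 2 - y k| + 1 / n) := by
  have hn0 : (0 : ℝ) < n := by exact_mod_cast hn
  set c := (y (p + j) + y (p + j + 1)) / 2 with hc
  have hjj : y (p + j) < y (p + j + 1) := hy (Nat.lt_succ_self _)
  have hcne : ∀ i, c ≠ y i := by
    intro i h
    rcases Nat.lt_or_ge (p + j) i with h1 | h1
    · have := hy.monotone (by omega : p + j + 1 ≤ i)
      linarith
    · have := hy.monotone h1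
      linarith
  set W := nodeDist n y c with hW
  have hW0 : 0 < W := Finset.prod_pos fun i _ => abs_pos.mpr (sub_ne_zero.mpr (hcne i))
  set f : ℕ → ℝ := fun k => W * nodeWt n y k / (|c - y k| + 1 / n) with hf
  have hf0 : ∀ k < n, 0 ≤ f k := fun k _ => by
    have := nodeWt_pos hy n k
    positivity
  refine le_trans ?_ (mul_le_mul_of_nonneg_left (pair_sum_le hpN hf0) pi_pos.le)
  rw [Finset.mul_sum]
  refine Finset.sum_le_sum fun k hk => ?_
  have hk' := Finset.mem_range.mp hk
  have m1 := nodeWt_pos hy n (p + k)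
  have m2 := nodeWt_pos hy n (p + k + 1)
  set a := nodeWt n y (p + k)
  set b := nodeWt n y (p + k + 1)
  have hd0 : 0 < y (p + k + 1) - y (p + k) := sub_pos.mpr (hy (Nat.lt_succ_self _))
  set d := y (p + k + 1) - y (p + k)
  have hz : StrictMono fun i => y (p + i) := fun i i' h => hy (by omega)
  have hκ0 := kap_pos hz (one_div_pos.mpr hn0) j k
  -- both endpoints of the `k`-th gap lie within the span used by the kernel
  have hκ : ∀ i, p + k ≤ i → i ≤ p + k + 1 →
      kap (fun i => y (p + i)) (1 / n) j k ≤ 1 / (|c - y i| + 1 / n) := by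
    intro i h1 h2
    unfold kap
    apply one_div_le_one_div_of_le (by positivity)
    have q1 : y (p + min j k) ≤ y (p + j) := hy.monotone (by omega)
    have q2 : y (p + min j k) ≤ y i := hy.monotone (by omega)
    have q3 : y (p + j + 1) ≤ y (p + (max j k + 1)) := hy.monotone (by omega)
    have q4 : y i ≤ y (p + (max j k + 1)) := hy.monotone (by omega)
    have : |c - y i| ≤ y (p + (max j k + 1)) - y (p + min j k) := by
      rw [abs_le]; constructor <;> linarith
    linarith
  set κ := kap (fun i => y (p + i)) (1 / n) j k
  have hfa : W * a * κ ≤ f (p + k) := by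
    have := mul_le_mul_of_nonneg_left (hκ (p + k) le_rfl (by omega)) (mul_pos hW0 m1).le
    rw [mul_one_div] at this
    exact this
  have hfb : W * b * κ ≤ f (p + k + 1) := by
    have := mul_le_mul_of_nonneg_left (hκ (p + k + 1) (by omega) le_rfl) (mul_pos hW0 m2).le
    rw [mul_one_div] at this
    exact this
  have hexp := add_one_le_exp (log W - (log d - log π - log a / 2 - log b / 2))
  have hval : d * exp (log W - (log d - log π - log a / 2 - log b / 2))
      = π * W * exp (log a / 2 + log b / 2) := by
    rw [show log W - (log d - log π - log a / 2 - log b / 2)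
      = log W + log π - log d + (log a / 2 + log b / 2) by ring, exp_add, exp_sub, exp_add,
      exp_log hW0, exp_log pi_pos, exp_log hd0]
    field_simp
  calc d * κ * (1 + log W - (log d - log π - log a / 2 - log b / 2))
      ≤ d * κ * exp (log W - (log d - log π - log a / 2 - log b / 2)) := by
        apply mul_le_mul_of_nonneg_left _ (mul_pos hd0 hκ0).le
        linarith
    _ = κ * (π * W * exp (log a / 2 + log b / 2)) := by rw [← hval]; ring
    _ ≤ κ * (π * W * ((a + b) / 2)) := by
        have := exp_mean_le m1 m2
        have := pi_pos
        gcongr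
    _ = π * ((W * a * κ + W * b * κ) / 2) := by ring
    _ ≤ π * ((f (p + k) + f (p + k + 1)) / 2) := by
        have := pi_pos
        gcongr

/-- Exchanging `j` and `k` in a sum with symmetric weights replaces `w k` by `w j`. -/
lemma symm_sum (N : ℕ) (d u w : ℕ → ℝ) (κ : ℕ → ℕ → ℝ) (hκ : ∀ j k, κ j k = κ k j) :
    ∑ j ∈ Finset.range N, d j * ∑ k ∈ Finset.range N, d k * κ j k * (1 + u j - w k)
      = ∑ j ∈ Finset.range N, d j * (1 + u j - w j) * ∑ k ∈ Finset.range N, d k * κ j k := by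
  have h : ∑ j ∈ Finset.range N, ∑ k ∈ Finset.range N, d j * (d k * κ j k) * w k
      = ∑ j ∈ Finset.range N, ∑ k ∈ Finset.range N, d j * (d k * κ j k) * w j := by
    rw [Finset.sum_comm]
    refine Finset.sum_congr rfl fun j _ => Finset.sum_congr rfl fun k _ => ?_
    rw [hκ k j]; ring
  have e1 : ∑ j ∈ Finset.range N, d j * ∑ k ∈ Finset.range N, d k * κ j k * (1 + u j - w k)
      = ∑ j ∈ Finset.range N, ∑ k ∈ Finset.range N, d j * (d k * κ j k) * (1 + u j)
        - ∑ j ∈ Finset.range N, ∑ k ∈ Finset.range N, d j * (d k * κ j k) * w k := by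
    rw [← Finset.sum_sub_distrib]
    refine Finset.sum_congr rfl fun j _ => ?_
    rw [← Finset.sum_sub_distrib, Finset.mul_sum]
    exact Finset.sum_congr rfl fun k _ => by ring
  rw [e1, h, ← Finset.sum_sub_distrib]
  refine Finset.sum_congr rfl fun j _ => ?_
  rw [← Finset.sum_sub_distrib, Finset.mul_sum]
  exact Finset.sum_congr rfl fun k _ => by ring

/-- The weighted average of `λ(c_j)` over the gaps between the nodes `y p, …, y (p + N)`, where `Λ`
bounds `λ` at the midpoints and `g` bounds the gaps. -/
lemma averaged_lower_bound {n : ℕ} (hn : 1 ≤ n) {y : ℕ → ℝ} (hy : StrictMono y)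
    (hy1 : ∀ i < n, y i ∈ Set.Icc (-1 : ℝ) 1) {p N : ℕ} (hpN : p + N < n) {Λ g : ℝ}
    (hΛ : ∀ j < N, lam n y ((y (p + j) + y (p + j + 1)) / 2) ≤ Λ)
    (hg : ∀ j < N, y (p + j + 1) - y (p + j) ≤ g) (hg0 : 0 ≤ g) (M : ℕ) :
    2 * (log n + 2) * (y (p + N) - y p)
      - 2 * (log n + 2) * ((y (p + N) - y p) / (M + 1) + 2 * g * M) - 60
      - π * 291600 * (y (p + N) - y p) ≤ π * Λ * (y (p + N) - y p) := by
  have hn0 : (0 : ℝ) < n := by exact_mod_cast hn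
  have hlogn : 0 ≤ log n := log_nonneg (by exact_mod_cast hn)
  set z : ℕ → ℝ := fun i => y (p + i) with hzdef
  have hz : StrictMono z := fun i i' h => hy (by omega)
  have hz0 : z 0 = y p := rfl
  have hzN : z N = y (p + N) := rfl
  have hε : (0 : ℝ) < 1 / n := one_div_pos.mpr hn0
  rw [← hz0, ← hzN]
  set L := z N - z 0 with hL
  have hL2 : L ≤ 2 := by
    have h1 := (hy1 _ hpN).2
    have h2 := (hy1 p (by omega)).1
    simp only [hL, hzN, hz0]; linarith
  have hL0 : 0 ≤ L := sub_nonneg.mpr (hz.monotone (Nat.zero_le _))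
  set d : ℕ → ℝ := fun j => z (j + 1) - z j with hd
  have hd0 : ∀ j, 0 < d j := fun j => sub_pos.mpr (hz (Nat.lt_succ_self j))
  set κ := kap z (1 / n) with hκ
  set c : ℕ → ℝ := fun j => (y (p + j) + y (p + j + 1)) / 2 with hc
  set u : ℕ → ℝ := fun j => log (nodeDist n y (c j)) with hu
  set w : ℕ → ℝ := fun k => log (d k) - log π - log (nodeWt n y (p + k)) / 2
    - log (nodeWt n y (p + k + 1)) / 2 with hw
  set v : ℕ → ℝ := fun j => ∑ k ∈ Finset.range N, d k * κ j k with hv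
  set V := 2 * (log n + 2) with hV
  set D := ∑ j ∈ Finset.range N, d j ^ 2 with hD
  have hdsum : ∑ j ∈ Finset.range N, d j = L := sum_gap z N
  have hvV : ∀ j < N, v j ≤ V := by
    intro j hj
    have h1 := row_le hz hε hj
    have h2 : log (L + 1 / n) ≤ 2 := by
      have h3 : (1 : ℝ) / n ≤ 1 := by
        rw [div_le_one hn0]; exact_mod_cast hn
      have := log_le_sub_one_of_pos (show 0 < L + 1 / n by positivity)
      linarith
    have h4 : log (1 / (n : ℝ)) = -log n := by rw [one_div, log_inv]
    rw [h4] at h1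
    change v j ≤ _ at h1
    linarith
  have hv0 : ∀ j, 0 ≤ v j := fun j =>
    Finset.sum_nonneg fun k _ => (mul_pos (hd0 k) (kap_pos hz hε j k)).le
  have hZ : 2 * L * log n - 12 - 5 * n * D ≤ ∑ j ∈ Finset.range N, d j * v j := by
    have h1 := double_sum_ge hz hε (N := N) hL2
    have h4 : log (1 / (n : ℝ)) = -log n := by rw [one_div, log_inv]
    rw [h4] at h1
    refine le_trans (le_of_eq ?_) h1
    rw [hD]
    field_simp
    ring
  have hcne : ∀ j i, c j ≠ y i := by
    intro j i h
    have hjj : y (p + j) < y (p + j + 1) := hy (Nat.lt_succ_self _)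
    simp only [hc] at h
    rcases Nat.lt_or_ge (p + j) i with h1 | h1
    · have := hy.monotone (by omega : p + j + 1 ≤ i)
      linarith
    · have := hy.monotone h1
      linarith
  -- lower bound of `π λ(c_j)` for one gap
  have hone : ∀ j < N, ∑ k ∈ Finset.range N, d k * κ j k * (1 + u j - w k)
      + (15 * n * d j - π * 291600) ≤ π * Λ := by
    intro j hj
    have hjj : y (p + j) < y (p + j + 1) := hy (Nat.lt_succ_self _)
    have h1 := far_sum_ge hn hy hpN j
    have hcI : c j ∈ Set.Icc (-1 : ℝ) 1 := by
      have a1 := hy1 (p + j) (by omega)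
      have a2 := hy1 (p + j + 1) (by omega)
      simp only [hc]
      constructor <;> linarith [a1.1, a1.2, a2.1, a2.2]
    have hfar : ∀ i < n, d j / 2 ≤ |y i - c j| := by
      intro i _
      have e : d j = y (p + j + 1) - y (p + j) := rfl
      simp only [hc]
      rcases Nat.lt_or_ge (p + j) i with h1 | h1
      · have := hy.monotone (by omega : p + j + 1 ≤ i)
        exact le_abs.mpr (Or.inl (by linarith))
      · have := hy.monotone h1
        exact le_abs.mpr (Or.inr (by linarith))
    have h2 := near_sum_ge hn hy hy1 hcI (half_pos (hd0 j)) hfar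
    have h3 := hΛ j hj
    change lam n y (c j) ≤ Λ at h3
    rw [lam_split hn (fun i _ => hcne j i)] at h3
    have h4 := mul_le_mul_of_nonneg_left h3 pi_pos.le
    have h5 := mul_le_mul_of_nonneg_left h2 pi_pos.le
    rw [mul_add] at h4
    have h6 : 15 * (n * d j) ≤ π * (10 * (n * (d j / 2))) := by
      nlinarith [pi_gt_three, mul_pos hn0 (hd0 j)]
    change ∑ k ∈ Finset.range N, d k * κ j k * (1 + u j - w k) ≤ _ at h1
    linarith
  have hsum : ∑ j ∈ Finset.range N, d j * (1 + u j - w j) * v j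
      + 15 * n * D - π * 291600 * L ≤ π * Λ * L := by
    have h1 : ∑ j ∈ Finset.range N, d j * (∑ k ∈ Finset.range N, d k * κ j k * (1 + u j - w k)
      + (15 * n * d j - π * 291600)) ≤ ∑ j ∈ Finset.range N, d j * (π * Λ) :=
      Finset.sum_le_sum fun j hj =>
        mul_le_mul_of_nonneg_left (hone j (Finset.mem_range.mp hj)) (hd0 j).le
    rw [← Finset.sum_mul, hdsum] at h1
    simp only [mul_add (d _), Finset.sum_add_distrib] at h1
    rw [symm_sum N d u w κ (kap_comm z (1 / n))] at h1
    have h2 : ∑ j ∈ Finset.range N, d j * (15 * n * d j - π * 291600)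
        = 15 * n * D - π * 291600 * L := by
      rw [hD, ← hdsum, Finset.mul_sum, Finset.mul_sum, ← Finset.sum_sub_distrib]
      exact Finset.sum_congr rfl fun j _ => by ring
    rw [h2] at h1
    linarith
  have hβ : ∀ j < N, beta z N M j ≤ u j - w j := by
    intro j hj
    have := beta_le_log hy hpN M hj
    refine this.trans (le_of_eq ?_)
    simp only [hu, hw, hc, hd, hzdef, ← add_assoc]
    ring
  have hB := sum_beta_ge hz hg hg0 M
  change -(L / (M + 1) + 2 * g * M) ≤ ∑ j ∈ Finset.range N, d j * beta z N M j at hB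
  -- replace the row sums by `V`, using `1 + beta ≤ 3`
  have hrow : ∑ j ∈ Finset.range N, (V * d j + V * (d j * beta z N M j) - 3 * V * d j
      + 3 * (d j * v j)) ≤ ∑ j ∈ Finset.range N, d j * (1 + u j - w j) * v j := by
    refine Finset.sum_le_sum fun j hj => ?_
    have hj' := Finset.mem_range.mp hj
    have b1 := hβ j hj'
    have b2 := beta_le hz N M j
    have b3 : 0 ≤ d j * (V - v j) := mul_nonneg (hd0 j).le (by linarith [hvV j hj'])
    have b4 : 0 ≤ d j * v j := mul_nonneg (hd0 j).le (hv0 j)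
    have b5 := mul_le_mul_of_nonneg_left b1 b4
    have b6 := mul_le_mul_of_nonneg_left b2 b3
    nlinarith
  simp only [Finset.sum_add_distrib, Finset.sum_sub_distrib, ← Finset.mul_sum, hdsum] at hrow
  have hV0 : 0 ≤ V := by positivity
  have hB' := mul_le_mul_of_nonneg_left hB hV0
  have hVL : V * L = 2 * L * log n + 4 * L := by rw [hV]; ring
  nlinarith

/-! ### The lower bound on a fixed interval -/

lemma log_cube_le {n : ℕ} (hn : 1 ≤ n) : log n ^ 3 ≤ 27 * n := by
  have hn0 : (0 : ℝ) < n := by exact_mod_cast hn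
  have hl : 0 ≤ log n := log_nonneg (by exact_mod_cast hn)
  have h1 : log n / 3 ≤ exp (log n / 3) := by linarith [add_one_le_exp (log n / 3)]
  have h2 : (log n / 3) ^ 3 ≤ exp (log n / 3) ^ 3 := by gcongr
  rw [← exp_nat_mul] at h2
  push_cast at h2
  rw [mul_div_cancel₀ _ (by norm_num : (3 : ℝ) ≠ 0), exp_log hn0] at h2
  linarith

/-- The error terms of `averaged_lower_bound` for `M = ⌈log n⌉` and gaps of size at most `36 log n / n`
stay bounded. -/
lemma error_le {n : ℕ} (hn : 1 ≤ n) (hl : 1 ≤ log n) {L : ℝ} (hL0 : 0 ≤ L) (hL2 : L ≤ 2) :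
    2 * (log n + 2) * (L / ((⌈log n⌉₊ : ℕ) + 1) + 2 * (36 * log n / n) * (⌈log n⌉₊ : ℕ))
      ≤ 23340 := by
  have hn0 : (0 : ℝ) < n := by exact_mod_cast hn
  have h3 := log_cube_le hn
  have hM1 : log n ≤ (⌈log n⌉₊ : ℕ) := Nat.le_ceil _
  have hM2 : ((⌈log n⌉₊ : ℕ) : ℝ) < log n + 1 := Nat.ceil_lt_add_one (by linarith)
  set l := log n
  set M : ℝ := ((⌈l⌉₊ : ℕ) : ℝ)
  have e1 : L / (M + 1) ≤ 2 / l := by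
    apply div_le_div₀ (by norm_num) hL2 (by linarith) (by linarith)
  have e2 : 2 * (36 * l / n) * M ≤ 2 * (36 * l / n) * (2 * l) := by
    gcongr
    linarith
  calc 2 * (l + 2) * (L / (M + 1) + 2 * (36 * l / n) * M)
      ≤ (6 * l) * (2 / l + 2 * (36 * l / n) * (2 * l)) := by
        have e3 : 2 * (l + 2) ≤ 6 * l := by linarith
        have e4 : 0 ≤ M := by linarith
        exact mul_le_mul e3 (add_le_add e1 e2) (by positivity) (by positivity)
    _ = 12 + 864 * (l ^ 3 / n) := by field_simp; ring
    _ ≤ 23340 := by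
        have : l ^ 3 / n ≤ 27 := by rwa [div_le_iff₀ hn0]
        linarith

/-- The main estimate for an upper bound `Λ` of `λ` on `[a, b]`, with `b - a = 8 h` and `n` large. -/
lemma lower_bound_of_le {n : ℕ} {a b h Λ : ℝ} (hh : 0 < h) (hab : b - a = 8 * h)
    (ha : -1 ≤ a) (hb : b ≤ 1) (hl : 1 ≤ log n) (hnh : 5832 ≤ n * h ^ 3)
    {y : ℕ → ℝ} (hy : StrictMono y) (hy1 : ∀ i < n, y i ∈ Set.Icc (-1 : ℝ) 1)
    (hΛ : ∀ t ∈ Set.Icc a b, lam n y t ≤ Λ) :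
    2 / π * log n - (291600 + 1950 / h) ≤ Λ := by
  have hn : 1 ≤ n := by
    rcases Nat.eq_zero_or_pos n with h0 | h0
    · subst h0; norm_num at hl
    · exact h0
  have hn1 : (1 : ℝ) ≤ n := by exact_mod_cast hn
  have hn0 : (0 : ℝ) < n := by linarith
  have hC : 0 < 1950 / h := by positivity
  have hπ := pi_gt_three
  by_contra! hcon
  have hΛl : Λ < log n := by
    have : 2 / π * log n ≤ 1 * log n := by
      apply mul_le_mul_of_nonneg_right _ (by linarith)
      rw [div_le_one pi_pos]; linarith
    linarith
  -- nodes are found near both ends of the interval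
  have hnode : ∀ c ∈ Set.Icc a b, ∃ i < n, |y i - c| < h := by
    intro c hc
    by_contra! hfar
    have h1 := lam_ge_of_far hn hy hy1 (Set.Icc_subset_Icc ha hb hc) hh hfar
    have h2 := hΛ c hc
    have h3 : (n : ℝ) ≤ (n * h) ^ 3 / 5832 := by
      rw [le_div_iff₀ (by norm_num)]
      calc (n : ℝ) * 5832 ≤ n * (n * h ^ 3) := by gcongr
        _ ≤ n * (n * h ^ 3) * n := le_mul_of_one_le_right (by positivity) hn1
        _ = _ := by ring
    linarith [log_le_sub_one_of_pos hn0]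
  obtain ⟨p, hpn, hp⟩ := hnode (a + h) ⟨by linarith, by linarith⟩
  obtain ⟨q, hqn, hq⟩ := hnode (b - h) ⟨by linarith, by linarith⟩
  rw [abs_lt] at hp hq
  have hpq : p < q := hy.lt_iff_lt.mp (by linarith)
  obtain ⟨N, rfl⟩ := Nat.exists_eq_add_of_lt hpq
  rw [add_assoc] at hqn hq
  set K := N + 1
  have hbetween : ∀ j < K, a ≤ y (p + j) ∧ y (p + j + 1) ≤ b := by
    intro j hj
    have h1 := hy.monotone (by omega : p ≤ p + j)
    have h2 := hy.monotone (by omega : p + j + 1 ≤ p + K)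
    constructor <;> linarith
  have hmid : ∀ j < K, (y (p + j) + y (p + j + 1)) / 2 ∈ Set.Icc a b := by
    intro j hj
    have h1 := hbetween j hj
    have h2 : y (p + j) < y (p + j + 1) := hy (Nat.lt_succ_self _)
    constructor <;> linarith
  -- a gap longer than `36 log n / n` would force `λ ≥ log n` at its midpoint
  have hgap : ∀ j < K, y (p + j + 1) - y (p + j) ≤ 36 * log n / n := by
    intro j hj
    have hd : 0 < y (p + j + 1) - y (p + j) := sub_pos.mpr (hy (Nat.lt_succ_self _))
    have hfar : ∀ i < n, (y (p + j + 1) - y (p + j)) / 2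
        ≤ |y i - (y (p + j) + y (p + j + 1)) / 2| := by
      intro i _
      rcases Nat.lt_or_ge (p + j) i with h1 | h1
      · have := hy.monotone (by omega : p + j + 1 ≤ i)
        exact le_abs.mpr (Or.inl (by linarith))
      · have := hy.monotone h1
        exact le_abs.mpr (Or.inr (by linarith))
    have h1 := lam_ge_of_far hn hy hy1 (Set.Icc_subset_Icc ha hb (hmid j hj)) (half_pos hd) hfar
    have h2 := hΛ _ (hmid j hj)
    set d := y (p + j + 1) - y (p + j)
    rw [le_div_iff₀ hn0]
    apply le_of_pow_le_pow_left₀ (three_ne_zero) (by positivity)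
    have h3 : log n ≤ log n ^ 3 := le_self_pow₀ hl three_ne_zero
    have h4 : (n * (d / 2)) ^ 3 / 5832 = (d * n) ^ 3 / 46656 := by ring
    rw [h4] at h1
    calc (d * n) ^ 3 ≤ 46656 * log n := by linarith
      _ ≤ 46656 * log n ^ 3 := by linarith
      _ = (36 * log n) ^ 3 := by ring
  have hcore := averaged_lower_bound hn hy hy1 hqn (fun j hj => hΛ _ (hmid j hj)) hgap (by positivity) ⌈log n⌉₊
  have hLl : 4 * h ≤ y (p + K) - y p := by linarith
  have hL2 : y (p + K) - y p ≤ 2 := by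
    linarith [(hy1 (p + K) hqn).2, (hy1 p hpn).1]
  set L := y (p + K) - y p
  have hL0 : 0 < L := by linarith
  have herr := error_le hn hl hL0.le hL2
  have hmul := mul_lt_mul_of_pos_right hcon (mul_pos pi_pos hL0)
  have e : (2 / π * log n - (291600 + 1950 / h)) * (π * L)
      = 2 * log n * L - π * 291600 * L - 1950 / h * (π * L) := by
    field_simp
    ring
  rw [e] at hmul
  have hfin : 23400 ≤ 1950 / h * (π * L) := by
    calc (23400 : ℝ) = 1950 / h * (3 * (4 * h)) := by field_simp; norm_num
      _ ≤ _ := by gcongr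
  linarith

/-! ### From `Fin n` to sequences -/

/-- The nodes `x` prolonged to a strictly increasing sequence by the values `2 + i`, so that the
range-indexed lemmas apply. -/
def extendNodes {n : ℕ} (x : Fin n → ℝ) (i : ℕ) : ℝ := if h : i < n then x ⟨i, h⟩ else 2 + i

lemma extendNodes_val {n : ℕ} (x : Fin n → ℝ) (i : Fin n) : extendNodes x i = x i := by
  simp [extendNodes]

lemma extendNodes_strictMono {n : ℕ} {x : Fin n → ℝ} (hx : StrictMono x) (h1 : ∀ i, x i ≤ 1) :
    StrictMono (extendNodes x) := by
  intro i j hij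
  unfold extendNodes
  split_ifs with hi hj hj
  · exact hx hij
  · have : (0 : ℝ) ≤ j := Nat.cast_nonneg j
    linarith [h1 ⟨i, hi⟩]
  · omega
  · have : (i : ℝ) < j := by exact_mod_cast hij
    linarith

lemma lam_extendNodes {n : ℕ} (x : Fin n → ℝ) (t : ℝ) :
    lam n (extendNodes x) t
      = ∑ k : Fin n, |∏ i ∈ Finset.univ.erase k, (t - x i) / (x k - x i)| := by
  rw [lam, ← Fin.sum_univ_eq_sum_range
    (fun k => |∏ i ∈ (Finset.range n).erase k, (t - extendNodes x i) / (extendNodes x k - extendNodes x i)|) n]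
  refine Finset.sum_congr rfl fun k _ => ?_
  have himg : (Finset.range n).erase k = (Finset.univ.erase k).map Fin.valEmbedding := by
    ext i
    simp only [Finset.mem_erase, Finset.mem_range, Finset.mem_map, Finset.mem_univ, and_true,
      Fin.valEmbedding_apply]
    constructor
    · rintro ⟨h1, h2⟩
      exact ⟨⟨i, h2⟩, fun h => h1 (by rw [← h]), rfl⟩
    · rintro ⟨i', h1, rfl⟩
      exact ⟨fun h => h1 (Fin.ext h), i'.isLt⟩
  rw [himg, Finset.prod_map]
  simp only [Fin.valEmbedding_apply, extendNodes_val]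

end

/-- **Localized Erdős lower bound for the Lebesgue constant.** For any fixed closed
interval `I = [a,b] ⊆ [-1,1]` of positive length there are constants `C = C(I) > 0` and
`N = N(I)` such that for any `n ≥ N` and any distinct nodes `x 0 < ⋯ < x (n-1)` in
`[-1,1]`, the supremum over `I` of the Lebesgue function
`λ(t) = ∑ k, |∏_{i ≠ k} (t - x i)/(x k - x i)|` is at least `(2/π) log n - C`. -/
theorem sup_lebesgue_function_lower_bound (a b : ℝ) (hab : a < b)
    (ha : -1 ≤ a) (hb : b ≤ 1) :
    ∃ C > 0, ∃ N : ℕ, ∀ n : ℕ, N ≤ n → ∀ x : Fin n → ℝ,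
      StrictMono x → (∀ i, x i ∈ Set.Icc (-1 : ℝ) 1) →
      2 / π * Real.log n - C ≤
        sSup ((fun t : ℝ => ∑ k : Fin n,
          |∏ i ∈ Finset.univ.erase k, (t - x i) / (x k - x i)|) '' Set.Icc a b) := by
  set h := (b - a) / 8 with hh
  have hh0 : 0 < h := by rw [hh]; linarith
  refine ⟨291600 + 1950 / h, by positivity, max 3 ⌈5832 / h ^ 3⌉₊, fun n hn x hx hx1 => ?_⟩
  have hn3 : (3 : ℝ) ≤ n := by exact_mod_cast (le_max_left _ _).trans hn
  have hnh : 5832 / h ^ 3 ≤ n := (Nat.le_ceil _).trans (by exact_mod_cast (le_max_right _ _).trans hn)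
  have hl : 1 ≤ log n := by
    rw [le_log_iff_exp_le (by linarith)]
    linarith [exp_one_lt_d9]
  refine lower_bound_of_le hh0 (by rw [hh]; ring) ha hb hl (by rwa [div_le_iff₀ (by positivity)] at hnh)
    (extendNodes_strictMono hx fun i => (hx1 i).2) (fun i hi => ?_) (fun t ht => ?_)
  · rw [show extendNodes x i = x ⟨i, hi⟩ from extendNodes_val x ⟨i, hi⟩]
    exact hx1 _
  · rw [lam_extendNodes]
    -- continuity on the compact interval makes the supremum a genuine one
    refine le_csSup (isCompact_Icc.bddAbove_image (Continuous.continuousOn ?_))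
      (Set.mem_image_of_mem _ ht)
    fun_prop
end

section
/- Let n ≥ 1 and let P : ℝ → ℝ be a real trigonometric polynomial of degree at most n having 2n distinct zeroes x_1, …, x_{2n} in [0, 2π) (each such zero is then simple, so P'(x_k) ≠ 0 for each k). Then sup_{x ∈ [0, 2π)} Σ_{k=1}^{2n} |P(x)|/|P'(x_k)| ≥ 2. -/
open Real

/-!
The bound follows from Bernstein's inequality `|P'(x)| ≤ n ‖P‖∞`: each of the `2n` terms
`‖P‖∞ / |P'(z k)|` is at least `1 / n`.

Bernstein's inequality (`bernstein_of_bound`) is proved by M. Riesz's interpolation argument at the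
nodes `t k = (2k+1)π/(2n)`, `k < 2n`, where `sin (n t k) = (-1)^k`. Consider the moments
`s j = ∑ k, (-1)^k sin (j t k) / (1 - cos (t k))`. Their second difference in `j` is
`-2 ∑ k, (-1)^k sin (j t k)`, which vanishes for `0 < j < n` (`sum_alternating_sin`), so
`s j = j s 1` for `j ≤ n` (`moment_linear`). Hence, if `Q(t) = ∑ j, c j sin (j t)`,
pairing `Q` with the weights `(-1)^k / (1 - cos (t k))` gives `s 1 * Q'(0)`, while the weights have
total mass `∑ k, 1 / (1 - cos (t k)) = s n = n s 1`; so `|Q'(0)| ≤ n ‖Q‖∞`. This is applied to the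
odd part `Q(t) = (P(x+t) - P(x-t)) / 2` of `P` about `x`.
-/

/-- The Riesz interpolation nodes `(2k+1)π/(2n)`, the zeroes of `cos (n t)` in `[0, 2π)` for
`k < 2n`. -/
noncomputable def rieszNode (n k : ℕ) : ℝ := (2 * k + 1) * (π / (2 * n))

/-- The `j`-th sine moment of the Riesz weights `(-1)^k / (1 - cos t_k)`. -/
noncomputable def rieszMoment (n j : ℕ) : ℝ :=
  ∑ k ∈ Finset.range (2 * n),
    (-1 : ℝ) ^ k / (1 - cos (rieszNode n k)) * sin (j * rieszNode n k)

lemma sin_mul_rieszNode {n : ℕ} (hn : 1 ≤ n) (k : ℕ) : sin (n * rieszNode n k) = (-1) ^ k := by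
  have hn0 : (n : ℝ) ≠ 0 := by positivity
  have h : (n : ℝ) * rieszNode n k = π / 2 + k * π := by
    unfold rieszNode; field_simp; ring
  rw [h, sin_add_nat_mul_pi, sin_pi_div_two, mul_one]

lemma one_sub_cos_rieszNode_pos {n k : ℕ} (hk : k < 2 * n) : 0 < 1 - cos (rieszNode n k) := by
  have hn : (0 : ℝ) < n := by
    have : 0 < n := by omega
    exact_mod_cast this
  have hk' : (k : ℝ) + 1 ≤ 2 * n := by exact_mod_cast hk
  have h0 : 0 < rieszNode n k := by unfold rieszNode; positivity
  have h1 : rieszNode n k < 2 * π := by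
    unfold rieszNode
    rw [← mul_div_assoc, div_lt_iff₀ (by positivity)]
    nlinarith [pi_pos]
  have hne : cos (rieszNode n k) ≠ 1 := fun h =>
    h0.ne' ((cos_eq_one_iff_of_lt_of_lt (by linarith [pi_pos]) h1).1 h)
  have := lt_of_le_of_ne (cos_le_one (rieszNode n k)) hne
  linarith

lemma sum_alternating_sin {n j : ℕ} (hj : j < n) :
    ∑ k ∈ Finset.range (2 * n), (-1 : ℝ) ^ k * sin (j * rieszNode n k) = 0 := by
  have hn : (0 : ℝ) < n := by
    have : 0 < n := by omega
    exact_mod_cast this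
  have hj' : (j : ℝ) < n := by exact_mod_cast hj
  set h : ℝ := π / (2 * n) with hh
  have hcos : 0 < cos (j * h) := by
    apply cos_pos_of_mem_Ioo
    constructor
    · have : 0 ≤ j * h := by positivity
      linarith [pi_pos]
    · rw [hh, ← mul_div_assoc, div_lt_div_iff₀ (by positivity) (by positivity)]
      nlinarith [pi_pos]
  -- Multiplication by `2 cos (j h)`, `h` being half the mesh, makes the alternating sum telescope.
  have tel : ∀ N : ℕ, (2 * cos (j * h)) *
      ∑ k ∈ Finset.range N, (-1 : ℝ) ^ k * sin (j * rieszNode n k)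
        = -((-1 : ℝ) ^ N * sin (j * (2 * N * h))) := by
    intro N
    induction N with
    | zero => simp
    | succ N ih =>
      rw [Finset.sum_range_succ, mul_add, ih]
      have e1 : (j : ℝ) * (2 * ((N + 1 : ℕ) : ℝ) * h) = j * rieszNode n N + j * h := by
        unfold rieszNode; rw [← hh]; push_cast; ring
      have e2 : (j : ℝ) * (2 * N * h) = j * rieszNode n N - j * h := by
        unfold rieszNode; rw [← hh]; ring
      rw [e1, e2, sin_add, sin_sub]
      ring
  have hend : (j : ℝ) * (2 * ((2 * n : ℕ) : ℝ) * h) = j * (2 * π) := by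
    rw [hh]; push_cast; field_simp
  have := tel (2 * n)
  rw [hend] at this
  have hs : sin (j * (2 * π)) = 0 := by
    have := sin_nat_mul_pi (2 * j)
    rw [← this]; push_cast; ring_nf
  rw [hs, mul_zero, neg_zero] at this
  exact (mul_eq_zero.1 this).resolve_left (by positivity)

lemma moment_linear {n : ℕ} (j : ℕ) (hj : j ≤ n) : rieszMoment n j = j * rieszMoment n 1 := by
  have hrec : ∀ i : ℕ, i + 1 < n →
      rieszMoment n (i + 2) = 2 * rieszMoment n (i + 1) - rieszMoment n i := by
    intro i hi
    have hz := sum_alternating_sin hi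
    have : rieszMoment n (i + 2) - (2 * rieszMoment n (i + 1) - rieszMoment n i) =
        -2 * ∑ k ∈ Finset.range (2 * n), (-1 : ℝ) ^ k * sin ((i + 1 : ℕ) * rieszNode n k) := by
      unfold rieszMoment
      rw [Finset.mul_sum, ← Finset.sum_sub_distrib, ← Finset.sum_sub_distrib, Finset.mul_sum]
      refine Finset.sum_congr rfl fun k hk => ?_
      have hpos := (one_sub_cos_rieszNode_pos (Finset.mem_range.1 hk)).ne'
      set t := rieszNode n k
      have e1 : ((i + 2 : ℕ) : ℝ) * t = (i + 1 : ℕ) * t + t := by push_cast; ring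
      have e2 : (i : ℝ) * t = (i + 1 : ℕ) * t - t := by push_cast; ring
      rw [e1, e2, sin_add, sin_sub]
      field_simp
      ring
    rw [hz] at this
    linarith
  induction j using Nat.strong_induction_on with
  | _ j ih =>
    match j with
    | 0 => simp [rieszMoment]
    | 1 => simp
    | i + 2 =>
      rw [hrec i (by omega), ih (i + 1) (by omega) (by omega), ih i (by omega) (by omega)]
      push_cast; ring

/-- Bernstein's inequality at the origin for an odd trigonometric polynomial: the derivative there
of `∑ c j sin (j t)` is `∑ j c j`. -/
lemma bernstein_odd {n : ℕ} (hn : 1 ≤ n) (c : ℕ → ℝ) (M : ℝ)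
    (hM : ∀ t : ℝ, |∑ j ∈ Finset.Icc 1 n, c j * sin (j * t)| ≤ M) :
    |∑ j ∈ Finset.Icc 1 n, j * c j| ≤ n * M := by
  have hn0 : (0 : ℝ) < n := by exact_mod_cast hn
  have hmass : ∑ k ∈ Finset.range (2 * n), 1 / (1 - cos (rieszNode n k)) = n * rieszMoment n 1 := by
    rw [← moment_linear n le_rfl, rieszMoment]
    refine Finset.sum_congr rfl fun k _ => ?_
    rw [sin_mul_rieszNode hn, div_mul_eq_mul_div, ← mul_pow]
    norm_num
  have hpos : 0 < rieszMoment n 1 := by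
    have : 0 < (n : ℝ) * rieszMoment n 1 := by
      rw [← hmass]
      refine Finset.sum_pos (fun k hk => ?_) ⟨0, Finset.mem_range.2 (by omega)⟩
      exact one_div_pos.2 (one_sub_cos_rieszNode_pos (Finset.mem_range.1 hk))
    exact (pos_iff_pos_of_mul_pos this).1 hn0
  have hpair : rieszMoment n 1 * ∑ j ∈ Finset.Icc 1 n, j * c j =
      ∑ k ∈ Finset.range (2 * n), (-1 : ℝ) ^ k / (1 - cos (rieszNode n k)) *
        ∑ j ∈ Finset.Icc 1 n, c j * sin (j * rieszNode n k) := by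
    simp_rw [Finset.mul_sum]
    rw [Finset.sum_comm]
    refine Finset.sum_congr rfl fun j hj => ?_
    have := moment_linear j (Finset.mem_Icc.1 hj).2
    calc rieszMoment n 1 * (j * c j) = c j * rieszMoment n j := by rw [this]; ring
      _ = _ := by
        rw [rieszMoment, Finset.mul_sum]
        exact Finset.sum_congr rfl fun k _ => by ring
  have hbound : |rieszMoment n 1 * ∑ j ∈ Finset.Icc 1 n, j * c j| ≤
      n * rieszMoment n 1 * M := by
    rw [hpair, ← hmass, Finset.sum_mul]
    refine (Finset.abs_sum_le_sum_abs _ _).trans (Finset.sum_le_sum fun k hk => ?_)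
    have hp := one_sub_cos_rieszNode_pos (Finset.mem_range.1 hk)
    rw [abs_mul, abs_div, abs_pow, abs_neg, abs_one, one_pow, abs_of_pos hp]
    exact mul_le_mul_of_nonneg_left (hM _) (by positivity)
  rw [abs_mul, abs_of_pos hpos] at hbound
  refine le_of_mul_le_mul_left ?_ hpos
  linarith

/-- **Bernstein's inequality**, with an arbitrary bound `M` of `|P|`. -/
lemma bernstein_of_bound {n : ℕ} (hn : 1 ≤ n) (a b : ℕ → ℝ) (P : ℝ → ℝ)
    (hP : ∀ x : ℝ, P x = a 0 + ∑ j ∈ Finset.Icc 1 n, (a j * cos (j * x) + b j * sin (j * x)))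
    (M : ℝ) (hM : ∀ x, |P x| ≤ M) (x : ℝ) : |deriv P x| ≤ n * M := by
  have hd : HasDerivAt P
      (∑ j ∈ Finset.Icc 1 n, j * (b j * cos (j * x) - a j * sin (j * x))) x := by
    rw [show P = _ from funext hP]
    refine HasDerivAt.const_add _ (HasDerivAt.fun_sum fun j _ => ?_)
    have hj : HasDerivAt (fun y : ℝ => (j : ℝ) * y) j x := by
      simpa using (hasDerivAt_id x).const_mul (j : ℝ)
    exact ((hj.cos.const_mul (a j)).add (hj.sin.const_mul (b j))).congr_deriv (by ring)
  rw [hd.deriv]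
  refine bernstein_odd hn _ M fun t => ?_
  have hodd : ∑ j ∈ Finset.Icc 1 n, (b j * cos (j * x) - a j * sin (j * x)) * sin (j * t) =
      (P (x + t) - P (x - t)) / 2 := by
    rw [hP, hP, add_sub_add_left_eq_sub, ← Finset.sum_sub_distrib, Finset.sum_div]
    refine Finset.sum_congr rfl fun j _ => ?_
    rw [mul_add, mul_sub, sin_add, sin_sub, cos_add, cos_sub]
    ring
  rw [hodd, abs_le]
  have h1 := abs_le.1 (hM (x + t))
  have h2 := abs_le.1 (hM (x - t))
  constructor <;> linarith

/-- **Trigonometric toy model, sup norm bound.** Let `P` be a real trigonometric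
polynomial of degree at most `n` with `2n` distinct zeroes `z 0, …, z (2n-1)` in
`[0, 2π)` (each such zero being simple, so that `P'(z k) ≠ 0`).  Then
`sup_{x ∈ [0,2π)} ∑ k, |P(x)|/|P'(z k)| ≥ 2`. -/
theorem trig_toy_sup_bound (n : ℕ) (hn : 1 ≤ n) (a b : ℕ → ℝ) (P : ℝ → ℝ)
    (hP : ∀ x : ℝ, P x = a 0 + ∑ j ∈ Finset.Icc 1 n,
      (a j * Real.cos (j * x) + b j * Real.sin (j * x)))
    (z : Fin (2 * n) → ℝ) (hzinj : Function.Injective z)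
    (hzmem : ∀ k, z k ∈ Set.Ico (0 : ℝ) (2 * π))
    (hzzero : ∀ k, P (z k) = 0)
    (hzsimple : ∀ k, deriv P (z k) ≠ 0) :
    2 ≤ sSup ((fun x : ℝ => ∑ k : Fin (2 * n), |P x| / |deriv P (z k)|) ''
      Set.Ico (0 : ℝ) (2 * π)) := by
  have hn0 : (0 : ℝ) < n := by exact_mod_cast hn
  set C : ℝ := ∑ k : Fin (2 * n), 1 / |deriv P (z k)| with hC
  have hfac : ∀ x, ∑ k : Fin (2 * n), |P x| / |deriv P (z k)| = |P x| * C := by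
    intro x
    rw [hC, Finset.mul_sum]
    exact Finset.sum_congr rfl fun k _ => by ring
  simp_rw [hfac]
  set S := sSup ((fun x : ℝ => |P x| * C) '' Set.Ico (0 : ℝ) (2 * π)) with hS
  have hCpos : 0 < C :=
    Finset.sum_pos (fun k _ => one_div_pos.2 (abs_pos.2 (hzsimple k)))
      ⟨⟨0, by omega⟩, Finset.mem_univ _⟩
  have hcont : Continuous P := by
    rw [show P = _ from funext hP]; fun_prop
  -- Boundedness of the image guards against the value `0` that `sSup` takes on unbounded sets.
  have hbdd : BddAbove ((fun x : ℝ => |P x| * C) '' Set.Ico (0 : ℝ) (2 * π)) :=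
    ((isCompact_Icc (a := (0 : ℝ)) (b := 2 * π)).bddAbove_image
      (by fun_prop : ContinuousOn (fun x : ℝ => |P x| * C) _)).mono
      (Set.image_mono Set.Ico_subset_Icc_self)
  have hper : Function.Periodic P (2 * π) := by
    intro x
    rw [hP, hP]
    congr 1
    refine Finset.sum_congr rfl fun j _ => ?_
    rw [mul_add, cos_add_nat_mul_two_pi, sin_add_nat_mul_two_pi]
  have hle : ∀ x, |P x| ≤ S / C := by
    intro x
    obtain ⟨y, hy, hxy⟩ := hper.exists_mem_Ico₀ two_pi_pos x
    rw [hxy, le_div_iff₀ hCpos]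
    exact le_csSup hbdd ⟨y, hy, rfl⟩
  have hB : ∀ k, |deriv P (z k)| ≤ n * (S / C) := fun k =>
    bernstein_of_bound hn a b P hP _ hle (z k)
  have hpos : 0 < (n : ℝ) * (S / C) :=
    (abs_pos.2 (hzsimple ⟨0, by omega⟩)).trans_le (hB _)
  have hsum : (2 * n : ℝ) * (1 / (n * (S / C))) ≤ C := by
    calc (2 * n : ℝ) * (1 / (n * (S / C)))
        = ∑ _k : Fin (2 * n), 1 / (n * (S / C)) := by simp
      _ ≤ C := Finset.sum_le_sum fun k _ =>
        one_div_le_one_div_of_le (abs_pos.2 (hzsimple k)) (hB k)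
  rw [mul_one_div, div_le_iff₀ hpos] at hsum
  have : C * (n * (S / C)) = n * S := by field_simp
  rw [this] at hsum
  nlinarith
end

section
/- Let n ≥ 1 and let P : ℝ → ℝ be a real trigonometric polynomial of degree at most n having 2n distinct zeroes x_1, …, x_{2n} in [0, 2π) (each such zero is then simple, so P'(x_k) ≠ 0 for each k). Then ∫_0^{2π} Σ_{k=1}^{2n} |P(x)|/|P'(x_k)| dx ≥ 8. -/
open Real

/-!
The integral factors as `(∫ |P|) * ∑ k, 1 / |P'(z k)|`, and the two factors are bounded below in
terms of the amplitude `c = √(a n ² + b n ²)` of the top frequency.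

*The `L¹` norm is at least `4c`.* Summing the translates `P(x + mπ/n)`, `0 ≤ m < 2n`, with
alternating signs kills every frequency below `n` and yields
`2n (a n cos(nx) + b n sin(nx))` (`sum_alternating_trig`). Each translate has the same `L¹` norm
over a period, and a pure oscillation of amplitude `c` has `L¹` norm `4c`
(`four_mul_norm_le_integral_abs`).

*The sum is at least `2 / c`.* Write `e^{inx} P(x) = F(e^{ix})` with `F` an algebraic polynomial of
degree at most `2n` whose coefficient of degree `2n` has modulus `c / 2`
(`exists_polynomial_of_trig`). Its roots are the points `w k = e^{i z k}` of the unit circle, where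
`|F'(w k)| = |P'(z k)|`. By Lagrange interpolation of `X ^ (2n - 1)`,
`∑ k, w k ^ (2n - 1) / ∏_{j ≠ k} (w k - w j) = 1`, and the triangle inequality gives the bound
(`one_le_norm_coeff_mul_sum`).
-/

/-! ### Derivatives at the zeroes -/

/-- The divided difference of `X ^ (N - 1)` at `N` points is `1`; for points on the unit circle
which are the roots of `F`, the triangle inequality turns this into a lower bound. -/
lemma one_le_norm_coeff_mul_sum {N : ℕ} (hN : 1 ≤ N) (F : Polynomial ℂ) (hdeg : F.natDegree ≤ N)
    (w : Fin N → ℂ) (hw : Function.Injective w) (hnorm : ∀ k, ‖w k‖ = 1)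
    (hroot : ∀ k, F.eval (w k) = 0) (hder : ∀ k, F.derivative.eval (w k) ≠ 0) :
    1 ≤ ‖F.coeff N‖ * ∑ k, 1 / ‖F.derivative.eval (w k)‖ := by
  classical
  have hcard : (Finset.univ : Finset (Fin N)).card = N := by simp
  have hinj : Set.InjOn w ((Finset.univ : Finset (Fin N)) : Set (Fin N)) := hw.injOn
  -- Both sides vanish at the `N` points and have the same coefficient of degree `N`.
  have hF : F = Polynomial.C (F.coeff N) * Lagrange.nodal Finset.univ w := by
    refine Polynomial.eq_of_degree_sub_lt_of_eval_index_eq Finset.univ hinj ?_ ?_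
    · rw [hcard, Polynomial.degree_lt_iff_coeff_zero]
      intro m hm
      rcases hm.eq_or_lt with rfl | hm
      · have h1 : (Lagrange.nodal Finset.univ w).coeff N = 1 := by
          have := (Lagrange.nodal_monic (s := Finset.univ) (v := w)).coeff_natDegree
          rwa [Lagrange.natDegree_nodal, hcard] at this
        simp [h1]
      · have h1 : (Lagrange.nodal Finset.univ w).coeff m = 0 :=
          Polynomial.coeff_eq_zero_of_natDegree_lt (by rw [Lagrange.natDegree_nodal, hcard]; exact hm)
        simp [h1, Polynomial.coeff_eq_zero_of_natDegree_lt (hdeg.trans_lt hm)]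
    · intro k hk
      simp [hroot, Lagrange.eval_nodal_at_node hk]
  have hF' : ∀ k, F.derivative.eval (w k)
      = F.coeff N * ∏ j ∈ Finset.univ.erase k, (w k - w j) := by
    intro k
    conv_lhs => rw [hF]
    rw [Polynomial.derivative_C_mul, Polynomial.eval_C_mul,
      Lagrange.eval_nodal_derivative_eval_node_eq (Finset.mem_univ k), Lagrange.eval_nodal]
  have hlc : F.coeff N ≠ 0 := fun h => hder ⟨0, hN⟩ (by rw [hF', h, zero_mul])
  have hX : (Polynomial.X ^ (N - 1) : Polynomial ℂ).degree
      < (Finset.univ : Finset (Fin N)).card := by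
    rw [hcard, Polynomial.degree_X_pow]
    exact_mod_cast Nat.sub_lt hN one_pos
  have key := Lagrange.coeff_eq_sum hinj hX
  rw [hcard, Polynomial.coeff_X_pow_self] at key
  calc (1 : ℝ) = ‖(1 : ℂ)‖ := by simp
    _ ≤ ∑ k, ‖(Polynomial.X ^ (N - 1) : Polynomial ℂ).eval (w k)
          / ∏ j ∈ Finset.univ.erase k, (w k - w j)‖ := by
        rw [key]; exact norm_sum_le _ _
    _ = ‖F.coeff N‖ * ∑ k, 1 / ‖F.derivative.eval (w k)‖ := by
        rw [Finset.mul_sum]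
        refine Finset.sum_congr rfl fun k _ => ?_
        have h0 : ‖F.coeff N‖ ≠ 0 := norm_ne_zero_iff.mpr hlc
        rw [hF', norm_div, norm_mul, Polynomial.eval_pow, Polynomial.eval_X, norm_pow, hnorm,
          one_pow, mul_one_div, div_mul_eq_div_div, div_self h0]

/-- `e^{inx} P(x)` is an algebraic polynomial in `e^{ix}` of degree at most `2n`. -/
lemma exists_polynomial_of_trig (n : ℕ) (hn : 1 ≤ n) (a b : ℕ → ℝ) (P : ℝ → ℝ)
    (hP : ∀ x : ℝ, P x = a 0 + ∑ j ∈ Finset.Icc 1 n,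
      (a j * Real.cos (j * x) + b j * Real.sin (j * x))) :
    ∃ F : Polynomial ℂ, F.natDegree ≤ 2 * n ∧
      F.coeff (2 * n) = ((a n : ℂ) - b n * Complex.I) / 2 ∧
      ∀ x : ℝ, F.eval (Complex.exp (x * Complex.I))
        = Complex.exp (x * Complex.I) ^ n * (P x : ℂ) := by
  refine ⟨Polynomial.C (a 0 : ℂ) * Polynomial.X ^ n + ∑ j ∈ Finset.Icc 1 n,
    (Polynomial.C (((a j : ℂ) - b j * Complex.I) / 2) * Polynomial.X ^ (n + j)
      + Polynomial.C (((a j : ℂ) + b j * Complex.I) / 2) * Polynomial.X ^ (n - j)), ?_, ?_, ?_⟩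
  · refine Polynomial.natDegree_add_le_of_degree_le
      ((Polynomial.natDegree_C_mul_X_pow_le _ _).trans (by omega)) ?_
    refine Polynomial.natDegree_sum_le_of_forall_le _ _ fun j hj => ?_
    rw [Finset.mem_Icc] at hj
    exact Polynomial.natDegree_add_le_of_degree_le
      ((Polynomial.natDegree_C_mul_X_pow_le _ _).trans (by omega))
      ((Polynomial.natDegree_C_mul_X_pow_le _ _).trans (by omega))
  · rw [Polynomial.coeff_add, Polynomial.finsetSum_coeff, Finset.sum_eq_single n]
    · simp only [Polynomial.coeff_add, Polynomial.coeff_C_mul, Polynomial.coeff_X_pow]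
      rw [if_neg (by omega), if_pos (by omega), if_neg (by omega)]
      ring
    · intro j hj hjn
      rw [Finset.mem_Icc] at hj
      simp only [Polynomial.coeff_add, Polynomial.coeff_C_mul, Polynomial.coeff_X_pow]
      rw [if_neg (by omega), if_neg (by omega)]
      ring
    · intro h
      exact absurd (Finset.mem_Icc.mpr ⟨hn, le_rfl⟩) h
  · intro x
    rw [hP]
    push_cast
    rw [mul_add, Finset.mul_sum, Polynomial.eval_add, Polynomial.eval_finsetSum]
    congr 1
    · rw [Polynomial.eval_C_mul, Polynomial.eval_pow, Polynomial.eval_X, mul_comm]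
    · refine Finset.sum_congr rfl fun j hj => ?_
      rw [Finset.mem_Icc] at hj
      simp only [Polynomial.eval_add, Polynomial.eval_mul, Polynomial.eval_C, Polynomial.eval_pow,
        Polynomial.eval_X]
      set e := Complex.exp (x * Complex.I) with he
      have he0 : e ≠ 0 := Complex.exp_ne_zero _
      have h1 : Complex.exp ((j * x : ℂ) * Complex.I) = e ^ j := by
        rw [he, ← Complex.exp_nat_mul]; ring_nf
      have h2 : Complex.exp (-(j * x : ℂ) * Complex.I) = (e ^ j)⁻¹ := by
        rw [← h1, ← Complex.exp_neg]; ring_nf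
      have h3 : e ^ n = e ^ (n - j) * e ^ j := by rw [← pow_add]; congr 1; omega
      rw [Complex.cos, Complex.sin, h1, h2, pow_add, h3]
      have hj0 : e ^ j ≠ 0 := pow_ne_zero _ he0
      generalize e ^ j = u at hj0 ⊢
      generalize e ^ (n - j) = v
      field_simp
      ring

/-! ### Lower bound for the `L¹` norm -/

/-- Over the `2n` shifts by multiples of `π / n`, alternating signs annihilate every frequency
below `n` and reinforce the frequency `n`. -/
lemma sum_alternating_exp (n : ℕ) (hn : 1 ≤ n) (j : ℕ) (hj : j ≤ n) (x : ℝ) :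
    ∑ m ∈ Finset.range (2 * n), (-1 : ℂ) ^ m *
        Complex.exp (((j * (x + m * (π / n)) : ℝ) : ℂ) * Complex.I)
      = if j = n then (2 * n : ℂ) * Complex.exp (((n * x : ℝ) : ℂ) * Complex.I) else 0 := by
  have hn0 : (n : ℝ) ≠ 0 := by positivity
  have hnC : (n : ℂ) ≠ 0 := by exact_mod_cast hn0
  set r : ℂ := -Complex.exp (((j * (π / n) : ℝ) : ℂ) * Complex.I) with hr
  have hterm : ∀ m : ℕ, (-1 : ℂ) ^ m *
      Complex.exp (((j * (x + m * (π / n)) : ℝ) : ℂ) * Complex.I)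
      = Complex.exp (((j * x : ℝ) : ℂ) * Complex.I) * r ^ m := by
    intro m
    rw [hr, neg_pow (Complex.exp _), ← Complex.exp_nat_mul, mul_left_comm, ← Complex.exp_add]
    congr 2
    push_cast
    ring
  simp_rw [hterm]
  rw [← Finset.mul_sum]
  split_ifs with h
  · have hr1 : r = 1 := by
      rw [hr, h, mul_div_cancel₀ _ hn0, Complex.exp_pi_mul_I, neg_neg]
    rw [hr1, h]
    simp [mul_comm]
  · have hr1 : r ≠ 1 := by
      intro h1
      have h2 : Real.cos (j * (π / n)) = -1 := by
        have h3 := congrArg Complex.re h1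
        rw [hr, Complex.neg_re, Complex.exp_ofReal_mul_I_re, Complex.one_re] at h3
        linarith
      have hlt : (j : ℝ) * (π / n) < π := by
        have : (j : ℝ) < n := by exact_mod_cast lt_of_le_of_ne hj h
        have hnpos : (0 : ℝ) < n := by positivity
        rw [mul_div_assoc', div_lt_iff₀ hnpos]
        nlinarith [Real.pi_pos]
      have := Real.cos_lt_cos_of_nonneg_of_le_pi (by positivity) le_rfl hlt
      rw [Real.cos_pi, h2] at this
      exact lt_irrefl _ this
    have hr2 : r ^ (2 * n) = 1 := by
      rw [hr, (even_two_mul n).neg_pow, ← Complex.exp_nat_mul, Complex.exp_eq_one_iff]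
      refine ⟨j, ?_⟩
      push_cast
      field_simp
    rw [geom_sum_eq hr1, hr2, sub_self, zero_div, mul_zero]

lemma sum_alternating_trig (n : ℕ) (hn : 1 ≤ n) (a b : ℕ → ℝ) (P : ℝ → ℝ)
    (hP : ∀ x : ℝ, P x = a 0 + ∑ j ∈ Finset.Icc 1 n,
      (a j * Real.cos (j * x) + b j * Real.sin (j * x))) (x : ℝ) :
    ∑ m ∈ Finset.range (2 * n), (-1 : ℝ) ^ m * P (x + m * (π / n))
      = 2 * n * (a n * Real.cos (n * x) + b n * Real.sin (n * x)) := by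
  have hsign : ∀ m : ℕ, ((-1 : ℂ) ^ m) = (((-1 : ℝ) ^ m : ℝ) : ℂ) := fun m => by push_cast; rfl
  have h2n : (2 * n : ℂ) = ((2 * n : ℝ) : ℂ) := by push_cast; rfl
  have hcos : ∀ j : ℕ, j ≤ n → ∑ m ∈ Finset.range (2 * n), (-1 : ℝ) ^ m *
      Real.cos (j * (x + m * (π / n))) = if j = n then 2 * n * Real.cos (n * x) else 0 := by
    intro j hj
    have h := congrArg Complex.re (sum_alternating_exp n hn j hj x)
    rw [apply_ite Complex.re, h2n] at h
    simpa only [Complex.re_sum, hsign, Complex.re_ofReal_mul, Complex.exp_ofReal_mul_I_re,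
      Complex.zero_re] using h
  have hsin : ∀ j : ℕ, j ≤ n → ∑ m ∈ Finset.range (2 * n), (-1 : ℝ) ^ m *
      Real.sin (j * (x + m * (π / n))) = if j = n then 2 * n * Real.sin (n * x) else 0 := by
    intro j hj
    have h := congrArg Complex.im (sum_alternating_exp n hn j hj x)
    rw [apply_ite Complex.im, h2n] at h
    simpa only [Complex.im_sum, hsign, Complex.im_ofReal_mul, Complex.exp_ofReal_mul_I_im,
      Complex.zero_im] using h
  have h0 : ∑ m ∈ Finset.range (2 * n), (-1 : ℝ) ^ m * a 0 = 0 := by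
    have h := hcos 0 (Nat.zero_le n)
    rw [if_neg (by omega)] at h
    rw [← Finset.sum_mul]
    simp only [Nat.cast_zero, zero_mul, Real.cos_zero, mul_one] at h
    rw [h, zero_mul]
  have hA : ∀ j ∈ Finset.Icc 1 n, ∑ m ∈ Finset.range (2 * n),
      (-1 : ℝ) ^ m * (a j * Real.cos (j * (x + m * (π / n))))
      = if j = n then 2 * n * (a n * Real.cos (n * x)) else 0 := by
    intro j hj
    simp_rw [mul_left_comm _ (a j)]
    rw [← Finset.mul_sum, hcos j (Finset.mem_Icc.mp hj).2]
    split_ifs with h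
    · rw [h]; ring
    · simp
  have hB : ∀ j ∈ Finset.Icc 1 n, ∑ m ∈ Finset.range (2 * n),
      (-1 : ℝ) ^ m * (b j * Real.sin (j * (x + m * (π / n))))
      = if j = n then 2 * n * (b n * Real.sin (n * x)) else 0 := by
    intro j hj
    simp_rw [mul_left_comm _ (b j)]
    rw [← Finset.mul_sum, hsin j (Finset.mem_Icc.mp hj).2]
    split_ifs with h
    · rw [h]; ring
    · simp
  have hexpand : ∀ m : ℕ, (-1 : ℝ) ^ m * P (x + m * (π / n)) = (-1 : ℝ) ^ m * a 0
      + (∑ j ∈ Finset.Icc 1 n, (-1 : ℝ) ^ m * (a j * Real.cos (j * (x + m * (π / n))))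
        + ∑ j ∈ Finset.Icc 1 n, (-1 : ℝ) ^ m * (b j * Real.sin (j * (x + m * (π / n))))) := by
    intro m
    rw [hP, Finset.sum_add_distrib, mul_add, mul_add, Finset.mul_sum, Finset.mul_sum]
  rw [Finset.sum_congr rfl fun m _ => hexpand m, Finset.sum_add_distrib, h0, zero_add,
    Finset.sum_add_distrib, Finset.sum_comm,
    Finset.sum_comm (f := fun (m j : ℕ) => (-1 : ℝ) ^ m * (b j * Real.sin (j * (x + m * (π / n)))))]
  rw [Finset.sum_congr rfl hA, Finset.sum_congr rfl hB, Finset.sum_ite_eq', Finset.sum_ite_eq',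
    if_pos (Finset.mem_Icc.mpr ⟨hn, le_rfl⟩), if_pos (Finset.mem_Icc.mpr ⟨hn, le_rfl⟩)]
  ring

lemma integral_abs_pure_frequency (n : ℕ) (hn : 1 ≤ n) (α β : ℝ) :
    ∫ x in (0 : ℝ)..(2 * π), |α * Real.cos (n * x) + β * Real.sin (n * x)|
      = 4 * ‖(⟨β, α⟩ : ℂ)‖ := by
  have hn0 : (n : ℝ) ≠ 0 := by positivity
  -- With `β + iα = c e^{iφ}`, the integrand is `|c sin(nx + φ)|`.
  set c := ‖(⟨β, α⟩ : ℂ)‖ with hc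
  set φ := Complex.arg ⟨β, α⟩ with hφ
  have h1 : c * Real.cos φ = β := Complex.norm_mul_cos_arg _
  have h2 : c * Real.sin φ = α := Complex.norm_mul_sin_arg _
  have hpoint : ∀ x : ℝ, |α * Real.cos (n * x) + β * Real.sin (n * x)|
      = c * |Real.sin (n * x + φ)| := by
    intro x
    have hc0 : 0 ≤ c := norm_nonneg _
    rw [← h1, ← h2]
    nth_rewrite 3 [← abs_of_nonneg hc0]
    rw [← abs_mul, Real.sin_add]
    congr 1
    ring
  have hper : Function.Periodic (fun x : ℝ => |Real.sin x|) π := fun x => by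
    simp [Real.sin_add_pi]
  have hcont : Continuous fun x : ℝ => |Real.sin x| := Real.continuous_sin.abs
  have hpi : ∫ x in (0 : ℝ)..π, |Real.sin x| = 2 := by
    have h : ∫ x in (0 : ℝ)..π, Real.sin x = 2 := by
      rw [integral_sin, Real.cos_zero, Real.cos_pi]; norm_num
    rw [← h]
    refine intervalIntegral.integral_congr fun x hx => ?_
    rw [Set.uIcc_of_le Real.pi_pos.le] at hx
    exact abs_of_nonneg (Real.sin_nonneg_of_mem_Icc hx)
  have hz := hper.intervalIntegral_add_zsmul_eq (2 * n : ℤ) φ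
    fun s t => hcont.intervalIntegrable s t
  rw [hper.intervalIntegral_add_eq φ 0, zero_add, hpi] at hz
  simp_rw [hpoint]
  rw [intervalIntegral.integral_const_mul,
    intervalIntegral.integral_comp_mul_add (fun x => |Real.sin x|) hn0 φ]
  have he : (n : ℝ) * (2 * π) + φ = φ + (2 * n : ℤ) • π := by
    rw [zsmul_eq_mul]; push_cast; ring
  rw [mul_zero, zero_add, he, hz, zsmul_eq_mul, smul_eq_mul]
  push_cast
  field_simp
  ring

/-- The `L¹` norm of a trigonometric polynomial dominates that of its top-frequency part, which is
an average of signed translates. -/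
lemma four_mul_norm_le_integral_abs (n : ℕ) (hn : 1 ≤ n) (a b : ℕ → ℝ) (P : ℝ → ℝ)
    (hP : ∀ x : ℝ, P x = a 0 + ∑ j ∈ Finset.Icc 1 n,
      (a j * Real.cos (j * x) + b j * Real.sin (j * x))) :
    4 * ‖(⟨b n, a n⟩ : ℂ)‖ ≤ ∫ x in (0 : ℝ)..(2 * π), |P x| := by
  have hn0 : (0 : ℝ) < 2 * n := by positivity
  have hcont : Continuous P := by
    rw [funext hP]; fun_prop
  have hper : Function.Periodic (fun x => |P x|) (2 * π) := by
    intro x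
    have : P (x + 2 * π) = P x := by
      rw [hP, hP]
      congr 1
      refine Finset.sum_congr rfl fun j _ => ?_
      rw [mul_add, Real.cos_add_nat_mul_two_pi, Real.sin_add_nat_mul_two_pi]
    simp only [this]
  have hshift : ∀ s : ℝ, ∫ x in (0 : ℝ)..(2 * π), |P (x + s)| = ∫ x in (0 : ℝ)..(2 * π), |P x| := by
    intro s
    rw [intervalIntegral.integral_comp_add_right (fun x => |P x|) s]
    have := hper.intervalIntegral_add_eq s 0
    rw [zero_add] at this
    rw [zero_add, add_comm (2 * π) s, this]
  have hle : ∫ x in (0 : ℝ)..(2 * π), 2 * n * |a n * Real.cos (n * x) + b n * Real.sin (n * x)|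
      ≤ ∫ x in (0 : ℝ)..(2 * π), ∑ m ∈ Finset.range (2 * n), |P (x + m * (π / n))| := by
    refine intervalIntegral.integral_mono_on (by positivity)
      (Continuous.intervalIntegrable (by fun_prop) _ _)
      (Continuous.intervalIntegrable (by fun_prop) _ _) fun x _ => ?_
    nth_rewrite 1 [← abs_of_pos hn0]
    rw [← abs_mul, ← sum_alternating_trig n hn a b P hP x]
    refine (Finset.abs_sum_le_sum_abs _ _).trans (le_of_eq ?_)
    refine Finset.sum_congr rfl fun m _ => ?_
    rw [abs_mul, abs_pow, abs_neg, abs_one, one_pow, one_mul]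
  rw [intervalIntegral.integral_const_mul, integral_abs_pure_frequency n hn,
    intervalIntegral.integral_finsetSum
      (fun m _ => Continuous.intervalIntegrable (by fun_prop) _ _)] at hle
  simp_rw [hshift] at hle
  rw [Finset.sum_const, Finset.card_range, nsmul_eq_mul] at hle
  push_cast at hle
  exact le_of_mul_le_mul_left hle hn0

/-! ### The integral bound -/

/-- **Trigonometric toy model, integral bound.** Let `P` be a real trigonometric
polynomial of degree at most `n` with `2n` distinct zeroes `z 0, …, z (2n-1)` in
`[0, 2π)` (each such zero being simple, so that `P'(z k) ≠ 0`).  Then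
`∫_0^{2π} ∑ k, |P(x)|/|P'(z k)| dx ≥ 8`. -/
theorem trig_toy_integral_bound (n : ℕ) (hn : 1 ≤ n) (a b : ℕ → ℝ) (P : ℝ → ℝ)
    (hP : ∀ x : ℝ, P x = a 0 + ∑ j ∈ Finset.Icc 1 n,
      (a j * Real.cos (j * x) + b j * Real.sin (j * x)))
    (z : Fin (2 * n) → ℝ) (hzinj : Function.Injective z)
    (hzmem : ∀ k, z k ∈ Set.Ico (0 : ℝ) (2 * π))
    (hzzero : ∀ k, P (z k) = 0)
    (hzsimple : ∀ k, deriv P (z k) ≠ 0) :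
    8 ≤ ∫ x in (0 : ℝ)..(2 * π), ∑ k : Fin (2 * n), |P x| / |deriv P (z k)| := by
  obtain ⟨F, hdeg, hcoeff, hF⟩ := exists_polynomial_of_trig n hn a b P hP
  set w : Fin (2 * n) → ℂ := fun k => Complex.exp (z k * Complex.I) with hw
  have hnorm : ∀ k, ‖w k‖ = 1 := fun k => Complex.norm_exp_ofReal_mul_I _
  have hwinj : Function.Injective w := by
    intro k l hkl
    obtain ⟨m, hm⟩ := Complex.exp_eq_exp_iff_exists_int.mp hkl
    have hre : z k = z l + m * (2 * π) := by
      have h := congrArg Complex.im hm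
      simpa using h
    have h1 := hzmem k
    have h2 := hzmem l
    have hpi := Real.pi_pos
    -- Both points lie in a half-open interval of length `2π`, so the winding number `m` is zero.
    have hm1 : (m : ℝ) < 1 := by nlinarith [h1.2, h2.1]
    have hm2 : (-1 : ℝ) < m := by nlinarith [h1.1, h2.2]
    have hm0 : m = 0 := by
      have h3 : m < 1 := by exact_mod_cast hm1
      have h4 : -1 < m := by exact_mod_cast hm2
      omega
    exact hzinj (by rw [hre, hm0]; simp)
  have hroot : ∀ k, F.eval (w k) = 0 := fun k => by rw [hw, hF, hzzero]; simp
  have hPdiff : Differentiable ℝ P := by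
    rw [funext hP]; fun_prop
  have hder : ∀ k, ‖F.derivative.eval (w k)‖ = |deriv P (z k)| := by
    intro k
    have he : HasDerivAt (fun x : ℝ => Complex.exp (x * Complex.I)) (w k * Complex.I) (z k) := by
      have h := ((Complex.ofRealCLM.hasDerivAt (x := z k)).mul_const Complex.I).cexp
      simpa [hw] using h
    have hL : HasDerivAt (fun x : ℝ => F.eval (Complex.exp (x * Complex.I)))
        (F.derivative.eval (w k) * (w k * Complex.I)) (z k) :=
      HasDerivAt.comp (h₂ := fun y => F.eval y) (z k) (F.hasDerivAt (w k)) he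
    have hR := (he.pow n).mul (hPdiff (z k)).hasDerivAt.ofReal_comp
    have hfun : (fun x : ℝ => F.eval (Complex.exp (x * Complex.I)))
        = fun x : ℝ => Complex.exp (x * Complex.I) ^ n * (P x : ℂ) := funext hF
    rw [hfun] at hL
    -- The term in which `P` itself appears vanishes at `z k`, and `|w k| = 1`.
    have heq := congrArg norm (hL.unique hR)
    simp only [hzzero, Pi.pow_apply, Complex.ofReal_zero, mul_zero, zero_add] at heq
    change _ = ‖w k ^ n * _‖ at heq
    simpa [hnorm] using heq
  have hone := one_le_norm_coeff_mul_sum (by omega) F hdeg w hwinj hnorm hroot fun k h =>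
    hzsimple k (abs_eq_zero.mp (by rw [← hder, h, norm_zero]))
  have hlc : ‖F.coeff (2 * n)‖ = ‖(⟨b n, a n⟩ : ℂ)‖ / 2 := by
    have : (a n : ℂ) - b n * Complex.I = -Complex.I * ⟨b n, a n⟩ := by
      apply Complex.ext <;> simp
    rw [hcoeff, this]
    simp
  have hL1 := four_mul_norm_le_integral_abs n hn a b P hP
  simp_rw [hder] at hone
  rw [hlc] at hone
  simp_rw [div_eq_mul_one_div |P _|, ← Finset.mul_sum]
  rw [intervalIntegral.integral_mul_const]
  have hS : 0 ≤ ∑ k, 1 / |deriv P (z k)| := Finset.sum_nonneg fun k _ => by positivity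
  linarith [mul_le_mul_of_nonneg_right hL1 hS]
end
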